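/- Law of large numbers for Betti numbers: fix integers 0 ≤ q < d and t ∈ [0,1]. Let P be any stationary and ergodic probability measure on the configuration space Ω = [0,1]^{K^d}. Then there exists a non-random constant β̂_q(t) (depending only on d, q, t, and P) such that |Λ_n|^{−1} β_q^n(t) converges to β̂_q(t) as n → ∞, P-almost surely. Moreover β̂_q(t) = limsup_{n→∞} |Λ_n|^{−1} E[β_q^n(t)]. -/

import Mathlib

open MeasureTheory Filter Topology

noncomputable section

/-- An elementary cube in `ℝ^d`: the `i`-th component is the elementary interval
`[l, l+1]` if the Boolean is `true` (nondegenerate) and `[l, l]` if `false` (degenerate). -/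
abbrev ElemCube (d : ℕ) := Fin d → ℤ × Bool

/-- The dimension of an elementary cube: the number of nondegenerate components. -/
def cubeDim {d : ℕ} (Q : ElemCube d) : ℕ :=
  (Finset.univ.filter fun i => (Q i).2 = true).card

/-- The geometric realization of an elementary cube as a subset of `ℝ^d`. -/
def cubeSet {d : ℕ} (Q : ElemCube d) : Set (Fin d → ℝ) :=
  {x | ∀ i, x i ∈ Set.Icc ((Q i).1 : ℝ) ((Q i).1 + (if (Q i).2 then 1 else 0))}

/-- A cubical set is a union of elementary cubes. -/
def IsCubical {d : ℕ} (X : Set (Fin d → ℝ)) : Prop :=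
  ∃ S : Set (ElemCube d), X = ⋃ Q ∈ S, cubeSet Q

/-- The free `ℤ`-module generated by all elementary cubes of `ℝ^d` (all dimensions mixed). -/
abbrev CubChain (d : ℕ) := ElemCube d →₀ ℤ

/-- The cubical boundary of a single elementary cube, defined by induction on the ambient
dimension, following the inductive definition: in `ℝ¹`, `∂ [l,l+1]^ = [l+1]^ - [l]^` and
`∂ Q̂ = 0` for degenerate `Q`; and for `Q = I × P`,
`∂ Q̂ = (∂ Î) ⋄ P̂ + (-1)^(dim I) Î ⋄ (∂ P̂)`, where `⋄` is the cubical product. -/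
def boundaryCube : (d : ℕ) → ElemCube d → CubChain d
  | 0, _ => 0
  | d + 1, Q =>
      (if (Q 0).2 then
          Finsupp.single (Fin.cons ((Q 0).1 + 1, false) (fun i => Q i.succ)) (1 : ℤ)
            - Finsupp.single (Fin.cons ((Q 0).1, false) (fun i => Q i.succ)) (1 : ℤ)
        else 0)
      + (if (Q 0).2 then (-1 : ℤ) else 1) •
          (boundaryCube d (fun i => Q i.succ)).sum
            (fun R n => Finsupp.single (Fin.cons (Q 0) R) n)

/-- The cubical boundary operator, the `ℤ`-linear extension of `boundaryCube`. -/
def boundaryHom (d : ℕ) : CubChain d →ₗ[ℤ] CubChain d :=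
  Finsupp.lsum ℤ fun Q => LinearMap.toSpanSingleton ℤ (CubChain d) (boundaryCube d Q)

/-- `C_k^d(X)`: the submodule of chains supported on the `k`-dimensional elementary cubes
contained in `X`. -/
def chainsOn (d k : ℕ) (X : Set (Fin d → ℝ)) : Submodule ℤ (CubChain d) :=
  Finsupp.supported ℤ ℤ {Q : ElemCube d | cubeDim Q = k ∧ cubeSet Q ⊆ X}

/-- `Z_q(X) = ker ∂_q^X`, the cycles of the cubical set `X` in degree `q`. -/
def cycleMod (d q : ℕ) (X : Set (Fin d → ℝ)) : Submodule ℤ (CubChain d) :=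
  chainsOn d q X ⊓ LinearMap.ker (boundaryHom d)

/-- `B_q(X) = im ∂_{q+1}^X`, the boundaries of the cubical set `X` in degree `q`. -/
def boundaryMod (d q : ℕ) (X : Set (Fin d → ℝ)) : Submodule ℤ (CubChain d) :=
  Submodule.map (boundaryHom d) (chainsOn d (q + 1) X)

/-- The `q`-th Betti number of a cubical set: the rank of the free part of the `q`-th
cubical homology `H_q(X) = Z_q(X) / B_q(X)`. -/
def betti (d q : ℕ) (X : Set (Fin d → ℝ)) : ℕ :=
  Module.finrank ℤ
    (↥(cycleMod d q X) ⧸ (boundaryMod d q X).comap (cycleMod d q X).subtype)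

/-- `Λ_n = [-n, n]^d ⊆ ℝ^d`. -/
def lambda (d n : ℕ) : Set (Fin d → ℝ) := {x | ∀ i, x i ∈ Set.Icc (-(n : ℝ)) n}

/-- The configuration space `Ω = [0,1]^{K^d}` with the product σ-field. -/
abbrev Config (d : ℕ) := ElemCube d → unitInterval

/-- Translation of an elementary cube by `x ∈ ℤ^d`. -/
def translateCube {d : ℕ} (x : Fin d → ℤ) (Q : ElemCube d) : ElemCube d :=
  fun i => ((Q i).1 + x i, (Q i).2)

/-- The translation action `τ_x` on configurations: `(τ_x ω)_Q = ω_{-x+Q}`. -/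
def configShift {d : ℕ} (x : Fin d → ℤ) (ω : Config d) : Config d :=
  fun Q => ω (translateCube (-x) Q)

/-- Stationarity of a measure on configuration space: `P(τ_x⁻¹ A) = P(A)`. -/
def Stationary {d : ℕ} (P : Measure (Config d)) : Prop :=
  ∀ (x : Fin d → ℤ) (A : Set (Config d)), MeasurableSet A → P (configShift x ⁻¹' A) = P A

/-- Ergodicity of a measure on configuration space under translations. -/
def ErgodicConfig {d : ℕ} (P : Measure (Config d)) : Prop :=
  ∀ A : Set (Config d), MeasurableSet A →
    (∀ x : Fin d → ℤ, configShift x ⁻¹' A = A) → P A = 0 ∨ P A = 1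

/-- The random cubical set `X(t) = ⋃ {Q ∈ K^d : ω_Q ≤ t}`. -/
def cubSet {d : ℕ} (ω : Config d) (t : ℝ) : Set (Fin d → ℝ) :=
  ⋃ Q ∈ {Q : ElemCube d | (ω Q : ℝ) ≤ t}, cubeSet Q

/-- `β_q^n(t)(ω) = β_q(X(t) ∩ Λ_n)`. -/
def bettiN (d q n : ℕ) (t : ℝ) (ω : Config d) : ℕ :=
  betti d q (cubSet ω t ∩ lambda d n)

/-- `β̂_q(t) := limsup_{n → ∞} |Λ_n|⁻¹ E[β_q^n(t)]`, where `|Λ_n| = (2n)^d`. -/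
def betaHat (d q : ℕ) (P : Measure (Config d)) (t : ℝ) : ℝ :=
  limsup (fun n : ℕ => ((2 * (n : ℝ)) ^ d)⁻¹ * ∫ ω, (bettiN d q n t ω : ℝ) ∂P) atTop


def runMax {Ω : Type*} (T : Ω → Ω) (g : Ω → ℝ) : ℕ → Ω → ℝ
  | 0, _ => 0
  | n + 1, ω => max 0 (g ω + runMax T g n (T ω))

lemma runMax_nonneg {Ω : Type*} (T : Ω → Ω) (g : Ω → ℝ) (n : ℕ) (ω : Ω) :
    0 ≤ runMax T g n ω := by
  cases n <;> simp [runMax]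

lemma runMax_le_succ {Ω : Type*} (T : Ω → Ω) (g : Ω → ℝ) (n : ℕ) :
    ∀ ω : Ω, runMax T g n ω ≤ runMax T g (n + 1) ω := by
  induction n with
  | zero => intro ω; simp [runMax]
  | succ n ih =>
    intro ω
    have := ih (T ω)
    simp only [runMax] at this ⊢
    gcongr

lemma sum_le_runMax {Ω : Type*} (T : Ω → Ω) (g : Ω → ℝ) (n : ℕ) :
    ∀ ω : Ω, birkhoffSum T g n ω ≤ runMax T g n ω := by
  induction n with
  | zero => intro ω; simp [runMax]
  | succ n ih =>
    intro ω
    rw [birkhoffSum_succ']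
    have := ih (T ω)
    simp only [runMax]
    exact le_max_of_le_right (by linarith)

lemma runMax_le {Ω : Type*} (T : Ω → Ω) (g : Ω → ℝ) (C : ℝ) (hC : ∀ ω, |g ω| ≤ C) (n : ℕ) :
    ∀ ω : Ω, runMax T g n ω ≤ n * C := by
  induction n with
  | zero => intro ω; simp [runMax]
  | succ n ih =>
    intro ω
    have h1 := ih (T ω)
    have h2 := abs_le.1 (hC ω)
    have h3 : 0 ≤ C := (abs_nonneg _).trans (hC ω)
    simp only [runMax]
    push_cast
    refine max_le (by positivity) (by linarith)

lemma runMax_meas {Ω : Type*} [MeasurableSpace Ω] {T : Ω → Ω} {g : Ω → ℝ}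
    (hT : Measurable T) (hg : Measurable g) (n : ℕ) :
    Measurable (runMax T g n) := by
  induction n with
  | zero => exact measurable_const
  | succ n ih => exact measurable_const.max (hg.add (ih.comp hT))

lemma integrable_of_bdd {Ω : Type*} [MeasurableSpace Ω] {μ : Measure Ω} [IsProbabilityMeasure μ]
    {g : Ω → ℝ} (hg : Measurable g) (C : ℝ) (hC : ∀ ω, |g ω| ≤ C) : Integrable g μ :=
  Integrable.of_bound hg.aestronglyMeasurable C (Eventually.of_forall hC)

lemma max_ergodic {Ω : Type*} [MeasurableSpace Ω] {μ : Measure Ω} [IsProbabilityMeasure μ]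
    {T : Ω → Ω} (hT : MeasurePreserving T μ μ) {g : Ω → ℝ} (hg : Measurable g)
    (C : ℝ) (hC : ∀ ω, |g ω| ≤ C) (hpos : ∀ ω, ∃ n, 0 < birkhoffSum T g n ω) :
    0 ≤ ∫ ω, g ω ∂μ := by
  set A : ℕ → Set Ω := fun n => {ω | runMax T g n ω ≤ 0} with hA
  have hAm : ∀ n, MeasurableSet (A n) := fun n =>
    measurableSet_le (runMax_meas hT.measurable hg n) measurable_const
  have hanti : Antitone A := antitone_nat_of_succ_le fun n ω hω =>
    (runMax_le_succ T g n ω).trans hω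
  have hint : ⋂ n, A n = ∅ := by
    ext ω
    simp only [Set.mem_iInter, Set.mem_empty_iff_false, iff_false, not_forall]
    obtain ⟨n, hn⟩ := hpos ω
    exact ⟨n, fun h => absurd (hn.trans_le (sum_le_runMax T g n ω)) (not_lt.2 h)⟩
  have hlim : Tendsto (fun n => μ.real (A n)) atTop (𝓝 0) := by
    have := tendsto_measure_iInter_atTop (μ := μ) (fun n => (hAm n).nullMeasurableSet) hanti
      ⟨0, measure_ne_top _ _⟩
    rw [hint, measure_empty] at this
    have h2 := (ENNReal.tendsto_toReal ENNReal.zero_ne_top).comp this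
    simpa [Measure.real, Function.comp_def] using h2
  have key : ∀ n, - C * μ.real (A (n+1)) ≤ ∫ ω, g ω ∂μ := by
    intro n
    set M := runMax T g (n+1) with hM
    have hMm : Measurable M := runMax_meas hT.measurable hg (n+1)
    have hMi : Integrable M μ := integrable_of_bdd hMm ((n+1 : ℕ) * C) fun ω => by
      rw [abs_of_nonneg (runMax_nonneg _ _ _ _)]
      exact runMax_le T g C hC (n+1) ω
    have hMTi : Integrable (fun ω => M (T ω)) μ := hT.integrable_comp_of_integrable hMi
    have hMT : ∫ ω, M (T ω) ∂μ = ∫ ω, M ω ∂μ := by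
      have := integral_map (μ := μ) hT.measurable.aemeasurable (f := M)
        (by rw [hT.map_eq]; exact hMm.aestronglyMeasurable)
      rw [hT.map_eq] at this
      exact this.symm
    have hind : Integrable ((A (n+1)).indicator (fun _ => -C)) μ :=
      (integrable_const _).indicator (hAm _)
    have hle : ∀ ω, (M ω - M (T ω)) + (A (n+1)).indicator (fun _ => -C) ω ≤ g ω := by
      intro ω
      by_cases hω : ω ∈ A (n+1)
      · rw [Set.indicator_of_mem hω]
        have h1 : M ω ≤ 0 := hω
        have h2 : 0 ≤ M (T ω) := runMax_nonneg _ _ _ _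
        have := abs_le.1 (hC ω)
        linarith
      · rw [Set.indicator_of_notMem hω]
        have h1 : 0 < M ω := not_le.1 hω
        have h2 : runMax T g n (T ω) ≤ M (T ω) := runMax_le_succ T g n (T ω)
        have h3 : M ω = max 0 (g ω + runMax T g n (T ω)) := rfl
        rcases max_choice 0 (g ω + runMax T g n (T ω)) with h | h
        · rw [h] at h3; linarith
        · rw [h] at h3; linarith
    have hi := integral_mono (μ := μ) ((hMi.sub hMTi).add hind) (integrable_of_bdd hg C hC) hle
    have e1 : ∫ ω, ((M - fun ω => M (T ω)) + (A (n+1)).indicator (fun _ => -C)) ω ∂μ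
        = - C * μ.real (A (n+1)) := by
      rw [integral_add' (hMi.sub hMTi) hind, integral_sub' hMi hMTi, hMT, sub_self, zero_add,
        integral_indicator (hAm _), setIntegral_const, smul_eq_mul, mul_comm]
    rw [← e1]
    exact hi
  have := (hlim.comp (tendsto_add_atTop_nat 1)).const_mul (-C)
  rw [mul_zero] at this
  exact le_of_tendsto' this key

lemma bAvg_le {Ω : Type*} (T : Ω → Ω) (f : Ω → ℝ) (C : ℝ) (hC : ∀ ω, |f ω| ≤ C) (n : ℕ) (ω : Ω) :
    |birkhoffAverage ℝ T f n ω| ≤ C := by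
  have h0 : 0 ≤ C := (abs_nonneg _).trans (hC ω)
  rcases Nat.eq_zero_or_pos n with rfl | hn
  · simpa [birkhoffAverage] using h0
  have hn' : (0:ℝ) < n := by exact_mod_cast hn
  rw [birkhoffAverage, smul_eq_mul, abs_mul, abs_of_nonneg (by positivity),
    inv_mul_le_iff₀ hn']
  refine (Finset.abs_sum_le_sum_abs _ _).trans ?_
  refine (Finset.sum_le_sum fun i _ => hC _).trans ?_
  simp

lemma bAvg_meas {Ω : Type*} [MeasurableSpace Ω] {T : Ω → Ω} (hT : Measurable T) {f : Ω → ℝ}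
    (hf : Measurable f) (n : ℕ) : Measurable (birkhoffAverage ℝ T f n) := by
  have h : Measurable (fun ω => ∑ i ∈ Finset.range n, f (T^[i] ω)) :=
    Finset.measurable_sum _ fun i _ => hf.comp (hT.iterate i)
  exact h.const_smul ((n : ℝ)⁻¹)

lemma isBdd_le {u : ℕ → ℝ} {C : ℝ} (h : ∀ n, |u n| ≤ C) :
    IsBoundedUnder (· ≤ ·) atTop u := isBoundedUnder_of ⟨C, fun n => (abs_le.1 (h n)).2⟩
lemma isBdd_ge {u : ℕ → ℝ} {C : ℝ} (h : ∀ n, |u n| ≤ C) :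
    IsBoundedUnder (· ≥ ·) atTop u := isBoundedUnder_of ⟨-C, fun n => (abs_le.1 (h n)).1⟩

lemma abs_limsup_le {u : ℕ → ℝ} {C : ℝ} (h : ∀ n, |u n| ≤ C) :
    |limsup u atTop| ≤ C := by
  rw [abs_le]
  constructor
  · exact le_limsup_of_frequently_le (Frequently.of_forall fun n => (abs_le.1 (h n)).1) (isBdd_le h)
  · exact limsup_le_of_le (isBdd_ge h).isCoboundedUnder_le
      (Eventually.of_forall fun n => (abs_le.1 (h n)).2)

lemma limsup_eq_of_sub {u v : ℕ → ℝ} {C : ℝ} (hu : ∀ n, |u n| ≤ C) (hv : ∀ n, |v n| ≤ C)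
    (h : Tendsto (fun n => u n - v n) atTop (𝓝 0)) : limsup u atTop = limsup v atTop := by
  have main : ∀ u v : ℕ → ℝ, (∀ n, |u n| ≤ C) → (∀ n, |v n| ≤ C) →
      Tendsto (fun n => u n - v n) atTop (𝓝 0) → limsup u atTop ≤ limsup v atTop := by
    intro u v hu hv h
    refine le_of_forall_pos_le_add fun ε hε => ?_
    have h1 : ∀ᶠ n in atTop, v n < limsup v atTop + ε / 2 :=
      eventually_lt_of_limsup_lt (by linarith) (isBdd_le hv)
    have h2 : ∀ᶠ n in atTop, u n - v n < ε / 2 := h.eventually_lt_const (by linarith)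
    refine limsup_le_of_le (isBdd_ge hu).isCoboundedUnder_le ?_
    filter_upwards [h1, h2] with n h1 h2
    linarith
  refine le_antisymm (main u v hu hv h) (main v u hv hu ?_)
  have := h.neg
  simpa using this

lemma integral_limsup_le {Ω : Type*} [MeasurableSpace Ω] {μ : Measure Ω} [IsProbabilityMeasure μ]
    {T : Ω → Ω} (hT : MeasurePreserving T μ μ) {f : Ω → ℝ} (hf : Measurable f)
    (C : ℝ) (hC : ∀ ω, |f ω| ≤ C) :
    ∫ ω, limsup (fun n => birkhoffAverage ℝ T f n ω) atTop ∂μ ≤ ∫ ω, f ω ∂μ := by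
  set F : Ω → ℝ := fun ω => limsup (fun n => birkhoffAverage ℝ T f n ω) atTop with hF
  have hFm : Measurable F := Measurable.limsup fun n => bAvg_meas hT.measurable hf n
  have hFb : ∀ ω, |F ω| ≤ C := fun ω => abs_limsup_le fun n => bAvg_le T f C hC n ω
  have hFT : F ∘ T = F := by
    funext ω
    refine limsup_eq_of_sub (fun n => bAvg_le T f C hC n _) (fun n => bAvg_le T f C hC n _) ?_
    refine tendsto_birkhoffAverage_apply_sub_birkhoffAverage ℝ ?_
    refine (Metric.isBounded_closedBall (x := (0:ℝ)) (r := C)).subset ?_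
    rintro _ ⟨n, rfl⟩
    simpa using hC _
  refine le_of_forall_pos_le_add fun ε hε => ?_
  have h := max_ergodic hT (g := fun ω => (f - F) ω + ε) (by fun_prop) (C + C + ε) (fun ω => by
    have h1 := abs_le.1 (hC ω)
    have h2 := abs_le.1 (hFb ω)
    rw [abs_le]; simp only [Pi.sub_apply]; constructor <;> linarith) (fun ω => by
    have h1 : F ω - ε < limsup (fun n => birkhoffAverage ℝ T f n ω) atTop := by
      simp only [hF]; linarith
    have h2 := frequently_lt_of_lt_limsup
      ((isBdd_ge fun n => bAvg_le T f C hC n ω).isCoboundedUnder_le) h1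
    obtain ⟨n, hn, hn0⟩ := (h2.and_eventually (eventually_gt_atTop 0)).exists
    refine ⟨n, ?_⟩
    have e : birkhoffSum T (fun ω => (f - F) ω + ε) n ω
        = birkhoffSum T f n ω - n * F ω + n * ε := by
      have : (fun ω => (f - F) ω + ε) = (f - F) + fun _ => ε := rfl
      rw [this, birkhoffSum_add', birkhoffSum_sub, birkhoffSum_of_comp_eq hFT]
      simp [birkhoffSum]
    have hn' : (0:ℝ) < n := by exact_mod_cast hn0
    rw [birkhoffAverage, smul_eq_mul, lt_inv_mul_iff₀ hn'] at hn
    rw [e]; linarith)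
  have hfi := integrable_of_bdd (μ := μ) hf C hC
  have hFi := integrable_of_bdd (μ := μ) hFm C hFb
  rw [integral_add (hfi.sub hFi) (integrable_const _), integral_sub' hfi hFi] at h
  simp at h
  linarith

lemma tendsto_of_limsup_add {u : ℕ → ℝ} {C : ℝ} (hu : ∀ n, |u n| ≤ C)
    (h : limsup u atTop + limsup (fun n => - u n) atTop ≤ 0) :
    Tendsto u atTop (𝓝 (limsup u atTop)) := by
  rw [Metric.tendsto_atTop']
  intro ε hε
  have h1 : ∀ᶠ n in atTop, u n < limsup u atTop + ε :=
    eventually_lt_of_limsup_lt (by linarith) (isBdd_le hu)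
  have h2 : ∀ᶠ n in atTop, - u n < limsup (fun n => - u n) atTop + ε :=
    eventually_lt_of_limsup_lt (by linarith) (isBdd_le (C := C) (fun n => by simpa using hu n))
  obtain ⟨N, hN⟩ := eventually_atTop.1 (h1.and h2)
  refine ⟨N, fun n hn => ?_⟩
  have := hN n hn.le
  rw [Real.dist_eq, abs_lt]
  constructor <;> linarith

lemma limsup_add_neg_nonneg {u : ℕ → ℝ} {C : ℝ} (hu : ∀ n, |u n| ≤ C) :
    0 ≤ limsup u atTop + limsup (fun n => - u n) atTop := by
  refine le_of_forall_pos_le_add fun ε hε => ?_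
  have h1 : ∀ᶠ n in atTop, u n < limsup u atTop + ε/2 :=
    eventually_lt_of_limsup_lt (by linarith) (isBdd_le hu)
  have h2 : ∀ᶠ n in atTop, - u n < limsup (fun n => - u n) atTop + ε/2 :=
    eventually_lt_of_limsup_lt (by linarith) (isBdd_le (C := C) (fun n => by simpa using hu n))
  obtain ⟨n, h1, h2⟩ := (h1.and h2).exists
  linarith

lemma birkhoff_bdd {Ω : Type*} [MeasurableSpace Ω] {μ : Measure Ω} [IsProbabilityMeasure μ]
    {T : Ω → Ω} (hT : MeasurePreserving T μ μ) {f : Ω → ℝ} (hf : Measurable f)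
    (C : ℝ) (hC : ∀ ω, |f ω| ≤ C) :
    ∃ g : Ω → ℝ, Measurable g ∧ (∀ ω, |g ω| ≤ C) ∧
      ∀ᵐ ω ∂μ, Tendsto (fun n => birkhoffAverage ℝ T f n ω) atTop (𝓝 (g ω)) := by
  have hC' : ∀ ω, |(-f) ω| ≤ C := fun ω => by simpa using hC ω
  have hneg : ∀ n ω, birkhoffAverage ℝ T (-f) n ω = - birkhoffAverage ℝ T f n ω := by
    intro n ω; simp [birkhoffAverage, birkhoffSum]
  set F : Ω → ℝ := fun ω => limsup (fun n => birkhoffAverage ℝ T f n ω) atTop with hF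
  set G : Ω → ℝ := fun ω => limsup (fun n => birkhoffAverage ℝ T (-f) n ω) atTop with hG
  have hFm : Measurable F := Measurable.limsup fun n => bAvg_meas hT.measurable hf n
  have hGm : Measurable G := Measurable.limsup fun n => bAvg_meas hT.measurable hf.neg n
  have hFb : ∀ ω, |F ω| ≤ C := fun ω => abs_limsup_le fun n => bAvg_le T f C hC n ω
  have hGb : ∀ ω, |G ω| ≤ C := fun ω => abs_limsup_le fun n => bAvg_le T (-f) C hC' n ω
  have hFi := integrable_of_bdd (μ := μ) hFm C hFb
  have hGi := integrable_of_bdd (μ := μ) hGm C hGb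
  have hnn : ∀ ω, 0 ≤ (F + G) ω := by
    intro ω
    have := limsup_add_neg_nonneg (fun n => bAvg_le T f C hC n ω)
    simpa [hF, hG, hneg] using this
  have hint : ∫ ω, (F + G) ω ∂μ = 0 := by
    refine le_antisymm ?_ (integral_nonneg hnn)
    rw [integral_add' hFi hGi]
    have h1 := integral_limsup_le hT hf C hC
    have h2 := integral_limsup_le hT hf.neg C hC'
    rw [integral_neg'] at h2
    linarith
  refine ⟨F, hFm, hFb, ?_⟩
  have := (integral_eq_zero_iff_of_nonneg hnn (hFi.add hGi)).1 hint
  filter_upwards [this] with ω hω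
  refine tendsto_of_limsup_add (fun n => bAvg_le T f C hC n ω) ?_
  have : F ω + G ω = 0 := hω
  simp only [hF, hG, hneg] at this
  exact this.le


lemma sum_Ico_neg (m : ℕ) (u : ℤ → ℝ) :
    ∑ j ∈ Finset.Ico (-(m:ℤ)) m, u j
      = ∑ i ∈ Finset.range m, u i + ∑ i ∈ Finset.range m, u (-1 - i) := by
  induction m with
  | zero => simp
  | succ m ih =>
    rw [Finset.sum_range_succ, Finset.sum_range_succ]
    have e : Finset.Ico (-((m+1:ℕ):ℤ)) ((m+1:ℕ):ℤ)
        = insert (-1 - (m:ℤ)) (insert (m:ℤ) (Finset.Ico (-(m:ℤ)) m)) := by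
      ext x; simp only [Finset.mem_Ico, Finset.mem_insert]; push_cast; omega
    rw [e, Finset.sum_insert, Finset.sum_insert, ih]
    · ring
    · simp
    · simp only [Finset.mem_Ico, Finset.mem_insert]; omega

/-- two-sided averages -/
lemma birkhoff_two {Ω : Type*} [MeasurableSpace Ω] {μ : Measure Ω} [IsProbabilityMeasure μ]
    {S : ℤ → Ω → Ω} (hadd : ∀ i j ω, S (i + j) ω = S i (S j ω)) (h0 : ∀ ω, S 0 ω = ω)
    (hS : ∀ j, MeasurePreserving (S j) μ μ) {f : Ω → ℝ} (hf : Measurable f)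
    (C : ℝ) (hC : ∀ ω, |f ω| ≤ C) :
    ∃ g : Ω → ℝ, Measurable g ∧ (∀ ω, |g ω| ≤ C) ∧
      ∀ᵐ ω ∂μ, Tendsto (fun m : ℕ => (2 * (m:ℝ))⁻¹ * ∑ j ∈ Finset.Ico (-(m:ℤ)) m, f (S j ω))
        atTop (𝓝 (g ω)) := by
  obtain ⟨g1, m1, b1, t1⟩ := birkhoff_bdd (hS 1) hf C hC
  obtain ⟨g2, m2, b2, t2⟩ := birkhoff_bdd (hS (-1)) (f := fun ω => f (S (-1) ω))
    (hf.comp (hS (-1)).measurable) C (fun ω => hC _)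
  refine ⟨fun ω => (1/2) * (g1 ω + g2 ω), by fun_prop, ?_, ?_⟩
  · intro ω
    have h1 := abs_le.1 (b1 ω)
    have h2 := abs_le.1 (b2 ω)
    rw [abs_le]; constructor <;> linarith
  · filter_upwards [t1, t2] with ω t1 t2
    have h1 : ∀ (i : ℕ), (S 1)^[i] ω = S i ω := by
      intro i
      induction i with
      | zero => simp [h0]
      | succ i ih => rw [Function.iterate_succ_apply', ih, ← hadd]; congr 1; push_cast; ring
    have h2 : ∀ (i : ℕ), S (-1) ((S (-1))^[i] ω) = S (-1 - i) ω := by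
      intro i
      induction i with
      | zero => simp
      | succ i ih => rw [Function.iterate_succ_apply', ih, ← hadd]; congr 1; push_cast; ring
    refine ((t1.add t2).const_mul (1/2)).congr fun m => ?_
    rw [sum_Ico_neg]
    simp only [birkhoffAverage, birkhoffSum, h1, h2, smul_eq_mul, mul_inv]
    ring

def zbox (k m : ℕ) : Finset (Fin k → ℤ) := Fintype.piFinset fun _ => Finset.Ico (-(m:ℤ)) m

lemma card_zbox (k m : ℕ) : ((zbox k m).card : ℝ) = (2 * (m:ℝ)) ^ k := by
  have : (m + m : ℤ).toNat = 2 * m := by omega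
  simp [zbox, this]

def zavg {Ω : Type*} {k : ℕ} (θ : (Fin k → ℤ) → Ω → Ω) (f : Ω → ℝ) (m : ℕ) (ω : Ω) : ℝ :=
  ((2 * (m:ℝ)) ^ k)⁻¹ * ∑ x ∈ zbox k m, f (θ x ω)

lemma avg_bound {ι : Type*} (s : Finset ι) (u : ι → ℝ) (C D : ℝ) (hC0 : 0 ≤ C)
    (hD : (s.card : ℝ) = D) (hC : ∀ i, |u i| ≤ C) : |D⁻¹ * ∑ i ∈ s, u i| ≤ C := by
  subst hD
  rcases Nat.eq_zero_or_pos s.card with h | h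
  · simp [h, hC0]
  have hn' : (0:ℝ) < s.card := by exact_mod_cast h
  rw [abs_mul, abs_of_nonneg (by positivity), inv_mul_le_iff₀ hn']
  refine (Finset.abs_sum_le_sum_abs _ _).trans ?_
  refine (Finset.sum_le_sum fun i _ => hC _).trans ?_
  simp

lemma zavg_le {Ω : Type*} {k : ℕ} (θ : (Fin k → ℤ) → Ω → Ω) (f : Ω → ℝ) (C : ℝ)
    (hC : ∀ ω, |f ω| ≤ C) (m : ℕ) (ω : Ω) : |zavg θ f m ω| ≤ C :=
  avg_bound _ _ C _ ((abs_nonneg _).trans (hC ω)) (card_zbox k m) fun _ => hC _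

lemma zavg_meas {Ω : Type*} [MeasurableSpace Ω] {k : ℕ} {θ : (Fin k → ℤ) → Ω → Ω}
    (hθ : ∀ x, Measurable (θ x)) {f : Ω → ℝ} (hf : Measurable f) (m : ℕ) :
    Measurable (zavg θ f m) := by
  have h : Measurable (fun ω => ∑ x ∈ zbox k m, f (θ x ω)) :=
    Finset.measurable_sum _ fun i _ => hf.comp (hθ i)
  exact h.const_mul _

/-- Maker-type lemma. -/
lemma maker {Ω : Type*} [MeasurableSpace Ω] {μ : Measure Ω} [IsProbabilityMeasure μ]
    {S : ℤ → Ω → Ω} (hadd : ∀ i j ω, S (i + j) ω = S i (S j ω)) (h0 : ∀ ω, S 0 ω = ω)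
    (hS : ∀ j, MeasurePreserving (S j) μ μ) {F : ℕ → Ω → ℝ} (hF : ∀ n, Measurable (F n))
    {f : Ω → ℝ} (hf : Measurable f)
    (C : ℝ) (hFC : ∀ n ω, |F n ω| ≤ C) (hC : ∀ ω, |f ω| ≤ C)
    (hlim : ∀ᵐ ω ∂μ, Tendsto (fun n => F n ω) atTop (𝓝 (f ω))) :
    ∃ g : Ω → ℝ, Measurable g ∧ (∀ ω, |g ω| ≤ C) ∧
      ∀ᵐ ω ∂μ, Tendsto (fun m : ℕ => (2 * (m:ℝ))⁻¹ * ∑ j ∈ Finset.Ico (-(m:ℤ)) m, F m (S j ω))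
        atTop (𝓝 (g ω)) := by
  obtain ⟨g, gm, gb, gt⟩ := birkhoff_two hadd h0 hS hf C hC
  refine ⟨g, gm, gb, ?_⟩
  have hbd : ∀ n ω, |F n ω - f ω| ≤ 2 * C := fun n ω => by
    have h1 := abs_le.1 (hFC n ω)
    have h2 := abs_le.1 (hC ω)
    rw [abs_le]; constructor <;> linarith
  set h : ℕ → Ω → ℝ := fun N ω => ⨆ m : ℕ, |F (N + m) ω - f ω| with hh
  have hba : ∀ N ω, BddAbove (Set.range fun m : ℕ => |F (N + m) ω - f ω|) := fun N ω =>
    ⟨2 * C, by rintro _ ⟨m, rfl⟩; exact hbd _ _⟩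
  have hm : ∀ N, Measurable (h N) := fun N =>
    Measurable.iSup fun m => ((hF (N + m)).sub hf).abs
  have hge : ∀ N n ω, N ≤ n → |F n ω - f ω| ≤ h N ω := by
    intro N n ω hn
    obtain ⟨m, rfl⟩ := Nat.exists_eq_add_of_le hn
    exact le_ciSup (hba N ω) m
  have hnn : ∀ N ω, 0 ≤ h N ω := fun N ω => (abs_nonneg _).trans (hge N N ω le_rfl)
  have hle : ∀ N ω, h N ω ≤ 2 * C := fun N ω => ciSup_le fun m => hbd _ _
  have hb : ∀ N ω, |h N ω| ≤ 2 * C := fun N ω => by rw [abs_of_nonneg (hnn N ω)]; exact hle N ω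
  have h0lim : ∀ᵐ ω ∂μ, Tendsto (fun N => h N ω) atTop (𝓝 0) := by
    filter_upwards [hlim] with ω hω
    rw [Metric.tendsto_atTop] at hω ⊢
    intro ε hε
    obtain ⟨N, hN⟩ := hω (ε/2) (by linarith)
    refine ⟨N, fun n hn => ?_⟩
    rw [Real.dist_eq, sub_zero, abs_of_nonneg (hnn n ω)]
    refine lt_of_le_of_lt (ciSup_le fun m => ?_) (half_lt_self hε)
    exact (hN (n + m) (by omega)).le
  have hint0 : Tendsto (fun N => ∫ ω, h N ω ∂μ) atTop (𝓝 0) := by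
    have := tendsto_integral_of_dominated_convergence (μ := μ) (F := h) (f := fun _ => 0)
      (fun _ => 2 * C) (fun N => (hm N).aestronglyMeasurable) (integrable_const _)
      (fun N => Eventually.of_forall (hb N)) h0lim
    simpa using this
  choose H Hm Hb Ht using fun N => birkhoff_two hadd h0 hS (hm N) (2 * C) (hb N)
  have Ht' := ae_all_iff.2 Ht
  -- integral of H N
  have Hint : ∀ N, ∫ ω, H N ω ∂μ = ∫ ω, h N ω ∂μ := by
    intro N
    have hcard : ∀ m : ℕ, ((Finset.Ico (-(m:ℤ)) m).card : ℝ) = 2 * (m:ℝ) := by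
      intro m
      have : (m + m : ℤ).toNat = 2 * m := by omega
      simp [this]
    have hmeas : ∀ m : ℕ, Measurable (fun ω => (2 * (m:ℝ))⁻¹ *
        ∑ j ∈ Finset.Ico (-(m:ℤ)) m, h N (S j ω)) := fun m => by
      have : Measurable (fun ω => ∑ j ∈ Finset.Ico (-(m:ℤ)) m, h N (S j ω)) :=
        Finset.measurable_sum _ fun j _ => (hm N).comp (hS j).measurable
      exact this.const_mul _
    have h1 := tendsto_integral_of_dominated_convergence (μ := μ)
      (F := fun (m : ℕ) ω => (2 * (m:ℝ))⁻¹ * ∑ j ∈ Finset.Ico (-(m:ℤ)) m, h N (S j ω))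
      (f := H N) (fun _ => 2 * C) (fun m => (hmeas m).aestronglyMeasurable)
      (integrable_const _)
      (fun m => Eventually.of_forall fun ω =>
        avg_bound _ _ (2 * C) _ ((abs_nonneg _).trans (hb N ω)) (hcard m) fun j => hb N _) (Ht N)
    refine tendsto_nhds_unique h1 (tendsto_const_nhds.congr' ?_)
    filter_upwards [eventually_gt_atTop 0] with m hm0
    have hm' : (0:ℝ) < m := by exact_mod_cast hm0
    have hji : ∀ j, ∫ ω, h N (S j ω) ∂μ = ∫ ω, h N ω ∂μ := by
      intro j
      have := integral_map (μ := μ) (hS j).measurable.aemeasurable (f := h N)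
        (by rw [(hS j).map_eq]; exact (hm N).aestronglyMeasurable)
      rw [(hS j).map_eq] at this
      exact this.symm
    rw [integral_const_mul, integral_finsetSum]
    · simp only [hji, Finset.sum_const, nsmul_eq_mul, hcard]
      field_simp
    · intro j _
      exact (hS j).integrable_comp_of_integrable (integrable_of_bdd (hm N) _ (hb N))
  -- inf of H N is zero
  have Hnn : ∀ᵐ ω ∂μ, ∀ N, 0 ≤ H N ω := by
    filter_upwards [Ht'] with ω hω N
    refine ge_of_tendsto' (hω N) fun m => ?_
    exact mul_nonneg (by positivity) (Finset.sum_nonneg fun j _ => hnn N _)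
  have Hinf : ∀ᵐ ω ∂μ, (⨅ N, H N ω) = 0 := by
    have hHi : ∀ N, Integrable (H N) μ := fun N => integrable_of_bdd (Hm N) _ (Hb N)
    have im : Measurable (fun ω => ⨅ N, H N ω) := Measurable.iInf Hm
    have bb : ∀ ω, BddBelow (Set.range fun N => H N ω) := fun ω =>
      ⟨-(2*C), by rintro _ ⟨N, rfl⟩; exact (abs_le.1 (Hb N ω)).1⟩
    have ib : ∀ ω, |⨅ N, H N ω| ≤ 2 * C := fun ω => by
      rw [abs_le]
      exact ⟨le_ciInf fun N => (abs_le.1 (Hb N ω)).1,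
        (ciInf_le (bb ω) 0).trans (abs_le.1 (Hb 0 ω)).2⟩
    have inn : 0 ≤ᵐ[μ] (fun ω => ⨅ N, H N ω) := by
      filter_upwards [Hnn] with ω hω
      exact le_ciInf hω
    have ii := integrable_of_bdd (μ := μ) im _ ib
    refine (integral_eq_zero_iff_of_nonneg_ae inn ii).1 ?_
    refine le_antisymm ?_ (integral_nonneg_of_ae inn)
    refine ge_of_tendsto' hint0 fun N => ?_
    rw [← Hint N]
    exact integral_mono ii (hHi N) fun ω => ciInf_le (bb ω) N
  filter_upwards [gt, Ht', Hinf] with ω gt Ht Hinf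
  rw [Metric.tendsto_atTop']
  intro ε hε
  obtain ⟨N, hN⟩ : ∃ N, H N ω < ε / 2 := exists_lt_of_ciInf_lt (by rw [Hinf]; linarith)
  have e1 := (Ht N).eventually_lt_const hN
  have e2 := (Metric.tendsto_nhds.1 gt) (ε/2) (by linarith)
  obtain ⟨n0, hn0⟩ := eventually_atTop.1 (e1.and (e2.and (eventually_ge_atTop N)))
  refine ⟨n0, fun n hn => ?_⟩
  obtain ⟨e1, e2, e3⟩ := hn0 n hn.le
  rw [Real.dist_eq] at e2 ⊢
  have e4 : |(2 * (n:ℝ))⁻¹ * ∑ j ∈ Finset.Ico (-(n:ℤ)) n, F n (S j ω)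
      - (2 * (n:ℝ))⁻¹ * ∑ j ∈ Finset.Ico (-(n:ℤ)) n, f (S j ω)|
      ≤ (2 * (n:ℝ))⁻¹ * ∑ j ∈ Finset.Ico (-(n:ℤ)) n, h N (S j ω) := by
    rw [← mul_sub, ← Finset.sum_sub_distrib, abs_mul, abs_of_nonneg (by positivity)]
    gcongr
    refine (Finset.abs_sum_le_sum_abs _ _).trans (Finset.sum_le_sum fun j _ => hge N n _ e3)
  rw [abs_lt] at e2 ⊢
  rw [abs_le] at e4
  constructor <;> linarith

lemma multi_ergodic {Ω : Type*} [MeasurableSpace Ω] {μ : Measure Ω} [IsProbabilityMeasure μ]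
    (C : ℝ) {f : Ω → ℝ} (hf : Measurable f) (hC : ∀ ω, |f ω| ≤ C) (k : ℕ) :
    ∀ {θ : (Fin k → ℤ) → Ω → Ω} (_ : ∀ i j ω, θ (i + j) ω = θ i (θ j ω))
    (_ : ∀ ω, θ 0 ω = ω) (_ : ∀ j, MeasurePreserving (θ j) μ μ),
    ∃ g : Ω → ℝ, Measurable g ∧ (∀ ω, |g ω| ≤ C) ∧
      ∀ᵐ ω ∂μ, Tendsto (fun m : ℕ => zavg θ f m ω) atTop (𝓝 (g ω)) := by
  induction k with
  | zero =>
    intro θ hadd h0 hS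
    refine ⟨f, hf, hC, Eventually.of_forall fun ω => ?_⟩
    refine tendsto_const_nhds.congr fun m => ?_
    simp only [zavg, zbox, pow_zero, inv_one, one_mul, Fintype.piFinset_of_isEmpty,
      Finset.univ_unique, Finset.sum_singleton]
    exact congrArg f ((h0 ω).symm.trans (congrArg (fun x => θ x ω) (Subsingleton.elim _ _)))
  | succ k ih =>
    intro θ hadd h0 hS
    obtain ⟨g, gm, gb, gt⟩ := ih (θ := fun x ω => θ (Fin.cons 0 x) ω)
      (fun i j ω => by
        rw [← hadd]; congr 1; funext a; refine Fin.cases ?_ (fun a => ?_) a <;> simp)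
      (fun ω => by
        have : (Fin.cons 0 0 : Fin (k+1) → ℤ) = 0 := by
          funext a; refine Fin.cases ?_ (fun a => ?_) a <;> simp
        rw [this, h0])
      (fun j => hS _)
    obtain ⟨G, Gm, Gb, Gt⟩ := maker (S := fun j ω => θ (Fin.cons j 0) ω)
      (fun i j ω => by
        rw [← hadd]; congr 1; funext a; refine Fin.cases ?_ (fun a => ?_) a <;> simp)
      (fun ω => by
        have : (Fin.cons 0 0 : Fin (k+1) → ℤ) = 0 := by
          funext a; refine Fin.cases ?_ (fun a => ?_) a <;> simp
        rw [this, h0])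
      (fun j => hS _)
      (fun m => zavg_meas (θ := fun (x : Fin k → ℤ) ω => θ (Fin.cons 0 x) ω)
        (fun x => (hS _).measurable) hf m) gm C
      (fun n ω => zavg_le _ f C hC n ω) gb gt
    refine ⟨G, Gm, Gb, ?_⟩
    filter_upwards [Gt] with ω Gt
    refine Gt.congr fun m => ?_
    simp only [zavg]
    rw [← Finset.mul_sum, ← mul_assoc, ← mul_inv, ← pow_succ', ← Finset.sum_product']
    congr 1
    refine Finset.sum_bij' (fun p _ => Fin.cons p.1 p.2) (fun x _ => (x 0, fun i => x i.succ))
      ?_ ?_ ?_ ?_ ?_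
    · rintro ⟨j, x⟩ h
      simp only [zbox, Finset.mem_product, Fintype.mem_piFinset] at h ⊢
      intro a; refine Fin.cases ?_ (fun a => ?_) a
      · simpa using h.1
      · simpa using h.2 a
    · intro x h
      simp only [zbox, Finset.mem_product, Fintype.mem_piFinset] at h ⊢
      exact ⟨h 0, fun a => h a.succ⟩
    · rintro ⟨j, x⟩ h
      simp
    · intro x h
      funext a; refine Fin.cases ?_ (fun a => ?_) a <;> simp
    · rintro ⟨j, x⟩ h
      simp only
      rw [← hadd]
      congr 2
      funext a; refine Fin.cases ?_ (fun a => ?_) a <;> simp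

lemma zavg_shift {Ω : Type*} {k : ℕ} (C : ℝ) {f : Ω → ℝ} (hC : ∀ ω, |f ω| ≤ C)
    {θ : (Fin k → ℤ) → Ω → Ω} (hadd : ∀ i j ω, θ (i + j) ω = θ i (θ j ω)) (z : Fin k → ℤ) (ω : Ω) :
    Tendsto (fun m : ℕ => zavg θ f m (θ z ω) - zavg θ f m ω) atTop (𝓝 0) := by
  classical
  have hC0 : 0 ≤ C := (abs_nonneg _).trans (hC ω)
  obtain ⟨r, hr⟩ : ∃ r : ℕ, ∀ i, |z i| ≤ r := by
    refine ⟨∑ i, (z i).natAbs, fun i => ?_⟩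
    rw [← Int.natCast_natAbs]
    exact_mod_cast Finset.single_le_sum (f := fun i => (z i).natAbs)
      (fun _ _ => Nat.zero_le _) (Finset.mem_univ i)
  have sub : ∀ (m : ℕ) (s : Finset (Fin k → ℤ)), s ⊆ zbox k (m + r) → s.card = (zbox k m).card →
      |∑ x ∈ zbox k (m + r), f (θ x ω) - ∑ x ∈ s, f (θ x ω)|
        ≤ C * ((2 * ((m + r : ℕ):ℝ)) ^ k - (2 * (m:ℝ)) ^ k) := by
    intro m s hs hc
    rw [← Finset.sum_sdiff hs, add_sub_cancel_right]
    refine (Finset.abs_sum_le_sum_abs _ _).trans ?_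
    refine (Finset.sum_le_sum fun i _ => hC _).trans ?_
    rw [Finset.sum_const, nsmul_eq_mul, Finset.cast_card_sdiff hs, hc, card_zbox, card_zbox,
      mul_comm]
  have hb : ∀ m : ℕ, |zavg θ f m (θ z ω) - zavg θ f m ω|
      ≤ ((2 * (m:ℝ)) ^ k)⁻¹ * (2 * (C * ((2 * ((m + r : ℕ):ℝ)) ^ k - (2 * (m:ℝ)) ^ k))) := by
    intro m
    have h1 := sub m (zbox k m) (fun x hx => by
      simp only [zbox, Fintype.mem_piFinset, Finset.mem_Ico] at hx ⊢
      intro i; have := hx i; push_cast; omega) rfl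
    have h2 := sub m ((zbox k m).image fun x => x + z) (fun x hx => by
      simp only [zbox, Fintype.mem_piFinset, Finset.mem_Ico, Finset.mem_image] at hx ⊢
      obtain ⟨y, hy, rfl⟩ := hx
      intro i; have := hy i; have := abs_le.1 (hr i); push_cast; simp only [Pi.add_apply]; omega)
      (Finset.card_image_of_injective _ (add_left_injective z))
    rw [Finset.sum_image (fun a _ b _ h => add_left_injective z h)] at h2
    simp only [zavg]
    rw [← mul_sub, abs_mul, abs_of_nonneg (by positivity)]
    gcongr
    simp only [← hadd]
    rw [abs_le] at h1 h2 ⊢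
    constructor <;> linarith
  have hlim : Tendsto (fun m : ℕ => 2 * C * ((((m:ℝ) + r) / m) ^ k - 1)) atTop (𝓝 0) := by
    have h1 : Tendsto (fun m : ℕ => ((m:ℝ) + r) / m) atTop (𝓝 1) := by
      have : Tendsto (fun m : ℕ => 1 + (r:ℝ) / m) atTop (𝓝 (1 + 0)) :=
        tendsto_const_nhds.add (tendsto_const_div_atTop_nhds_zero_nat _)
      rw [add_zero] at this
      refine this.congr' ?_
      filter_upwards [eventually_gt_atTop 0] with m hm
      have : (m:ℝ) ≠ 0 := by positivity
      field_simp
    have := ((h1.pow k).sub_const 1).const_mul (2 * C)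
    simpa using this
  refine squeeze_zero_norm' ?_ hlim
  filter_upwards [eventually_gt_atTop 0] with m hm
  rw [Real.norm_eq_abs]
  refine (hb m).trans (le_of_eq ?_)
  have : (m:ℝ) ≠ 0 := by positivity
  push_cast
  rw [mul_pow, mul_pow, div_pow]
  field_simp

lemma ergodic_const {Ω : Type*} [MeasurableSpace Ω] {μ : Measure Ω} [IsProbabilityMeasure μ]
    (C : ℝ) {f : Ω → ℝ} (hf : Measurable f) (hC : ∀ ω, |f ω| ≤ C) {k : ℕ}
    {θ : (Fin k → ℤ) → Ω → Ω} (hadd : ∀ i j ω, θ (i + j) ω = θ i (θ j ω))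
    (h0 : ∀ ω, θ 0 ω = ω) (hmp : ∀ j, MeasurePreserving (θ j) μ μ)
    (herg : ∀ A : Set Ω, MeasurableSet A → (∀ x, θ x ⁻¹' A = A) → μ A = 0 ∨ μ A = 1) :
    ∃ c : ℝ, ∀ᵐ ω ∂μ, Tendsto (fun m : ℕ => zavg θ f m ω) atTop (𝓝 c) := by
  obtain ⟨g, -, -, gt⟩ := multi_ergodic C hf hC k hadd h0 hmp
  set G : Ω → ℝ := fun ω => limsup (fun m : ℕ => zavg θ f m ω) atTop with hG
  have Gm : Measurable G := Measurable.limsup fun m => zavg_meas (fun x => (hmp x).measurable) hf m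
  have Ginv : ∀ x ω, G (θ x ω) = G ω := fun x ω =>
    limsup_eq_of_sub (fun m => zavg_le θ f C hC m _) (fun m => zavg_le θ f C hC m _)
      (zavg_shift C hC hadd x ω)
  obtain ⟨c, hc⟩ := exists_eventuallyEq_const_of_forall_separating (l := ae μ) (f := G)
    MeasurableSet fun U hU => by
      have hm : MeasurableSet (G ⁻¹' U) := Gm hU
      rcases herg (G ⁻¹' U) hm (fun x => by ext ω; simp [Ginv]) with h | h
      · right
        exact measure_eq_zero_iff_ae_notMem.1 h
      · left
        exact (prob_compl_eq_zero_iff hm).2 h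
  refine ⟨c, ?_⟩
  filter_upwards [gt, hc] with ω gt hc
  have : G ω = g ω := gt.limsup_eq
  rw [hc] at this
  simp only [Function.const_apply] at this
  rw [this]
  exact gt


lemma mem_cubeSet_cons {d : ℕ} (a : ℤ × Bool) (R : ElemCube d) (x : Fin (d+1) → ℝ) :
    x ∈ cubeSet (Fin.cons a R : ElemCube (d+1)) ↔
      x 0 ∈ Set.Icc (a.1 : ℝ) (a.1 + (if a.2 then 1 else 0)) ∧ (fun i => x i.succ) ∈ cubeSet R := by
  simp only [cubeSet, Set.mem_ofPred_eq, Fin.forall_fin_succ, Fin.cons_zero, Fin.cons_succ]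

lemma cubeDim_cons {d : ℕ} (a : ℤ × Bool) (R : ElemCube d) :
    cubeDim (Fin.cons a R : ElemCube (d+1)) = (if a.2 then 1 else 0) + cubeDim R := by
  unfold cubeDim
  rw [Fin.card_filter_univ_succ]
  simp only [Fin.cons_zero, Fin.cons_succ]
  split_ifs <;> omega

lemma boundaryCube_mem (d : ℕ) : ∀ Q : ElemCube d, boundaryCube d Q ∈
    Finsupp.supported ℤ ℤ {R : ElemCube d | cubeDim R + 1 = cubeDim Q ∧ cubeSet R ⊆ cubeSet Q} := by
  induction d with
  | zero => intro Q; simp [boundaryCube]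
  | succ d ih =>
    intro Q
    obtain ⟨a, P, rfl⟩ : ∃ a P, Q = (Fin.cons a P : ElemCube (d+1)) :=
      ⟨Q 0, fun i => Q i.succ, (Fin.cons_self_tail Q).symm⟩
    have ihP := ih P
    simp only [boundaryCube, Fin.cons_zero, Fin.cons_succ]
    refine Submodule.add_mem _ ?_ (Submodule.smul_mem _ _ ?_)
    · split_ifs with h
      · refine Submodule.sub_mem _ ?_ ?_
        · refine Finsupp.single_mem_supported _ _ ⟨?_, fun x hx => ?_⟩
          · rw [cubeDim_cons, cubeDim_cons]; simp [h]; exact add_comm _ _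
          · rw [mem_cubeSet_cons] at hx ⊢
            refine ⟨?_, hx.2⟩
            have := hx.1
            simp only [Set.mem_Icc, h] at this ⊢
            push_cast at this
            simp at this ⊢
            constructor <;> linarith
        · refine Finsupp.single_mem_supported _ _ ⟨?_, fun x hx => ?_⟩
          · rw [cubeDim_cons, cubeDim_cons]; simp [h]; exact add_comm _ _
          · rw [mem_cubeSet_cons] at hx ⊢
            refine ⟨?_, hx.2⟩
            have := hx.1
            simp only [Set.mem_Icc, h] at this ⊢
            simp at this ⊢
            constructor <;> linarith
      · exact Submodule.zero_mem _
    · refine Submodule.sum_mem _ fun R hR => ?_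
      have hR' : cubeDim R + 1 = cubeDim P ∧ cubeSet R ⊆ cubeSet P :=
        (Finsupp.mem_supported _ _).1 ihP hR
      refine Finsupp.single_mem_supported _ _ ⟨?_, fun x hx => ?_⟩
      · rw [cubeDim_cons, cubeDim_cons]; omega
      · rw [mem_cubeSet_cons] at hx ⊢
        exact ⟨hx.1, hR'.2 hx.2⟩

def cubesIn {d : ℕ} (X : Set (Fin d → ℝ)) : Set (ElemCube d) := {Q | cubeSet Q ⊆ X}

def FaceClosed {d : ℕ} (A : Set (ElemCube d)) : Prop :=
  ∀ Q ∈ A, ∀ R, cubeSet R ⊆ cubeSet Q → R ∈ A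

lemma faceClosed_cubesIn {d : ℕ} (X : Set (Fin d → ℝ)) : FaceClosed (cubesIn X) :=
  fun _ hQ _ hR => hR.trans hQ

def dimPart {d : ℕ} (k : ℕ) (A : Set (ElemCube d)) : Set (ElemCube d) :=
  {Q | cubeDim Q = k ∧ Q ∈ A}

def chA (d k : ℕ) (A : Set (ElemCube d)) : Submodule ℤ (CubChain d) :=
  Finsupp.supported ℤ ℤ (dimPart k A)

def bettiA (d q : ℕ) (A : Set (ElemCube d)) : ℕ :=
  Module.finrank ℤ
    (↥(chA d q A ⊓ LinearMap.ker (boundaryHom d)) ⧸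
      (Submodule.map (boundaryHom d) (chA d (q + 1) A)).comap
        (chA d q A ⊓ LinearMap.ker (boundaryHom d)).subtype)

lemma betti_eq (d q : ℕ) (X : Set (Fin d → ℝ)) : betti d q X = bettiA d q (cubesIn X) := rfl

lemma boundaryHom_single (d : ℕ) (Q : ElemCube d) (n : ℤ) :
    boundaryHom d (Finsupp.single Q n) = n • boundaryCube d Q := by
  simp [boundaryHom]

lemma map_supported_le {d : ℕ} (φ : CubChain d →ₗ[ℤ] CubChain d) (s : Set (ElemCube d))
    (V : Submodule ℤ (CubChain d)) (h : ∀ Q ∈ s, φ (Finsupp.single Q 1) ∈ V) :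
    Submodule.map φ (Finsupp.supported ℤ ℤ s) ≤ V := by
  rw [Finsupp.supported_eq_span_single, Submodule.map_span_le]
  rintro _ ⟨Q, hQ, rfl⟩
  exact h Q hQ

lemma map_boundary_chA {d : ℕ} (k : ℕ) {A : Set (ElemCube d)} (hA : FaceClosed A) :
    Submodule.map (boundaryHom d) (chA d (k+1) A) ≤ chA d k A := by
  refine map_supported_le _ _ _ fun Q hQ => ?_
  rw [boundaryHom_single, one_smul]
  refine Finsupp.supported_mono ?_ (boundaryCube_mem d Q)
  rintro R ⟨h1, h2⟩
  have := hQ.1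
  exact ⟨by omega, hA Q hQ.2 R h2⟩

/-- local maps -/
def IsLocalMap {d : ℕ} (φ : CubChain d →ₗ[ℤ] CubChain d) : Prop :=
  ∀ W : Set (ElemCube d), FaceClosed W →
    Submodule.map φ (Finsupp.supported ℤ ℤ W) ≤ Finsupp.supported ℤ ℤ W

lemma isLocal_boundary (d : ℕ) : IsLocalMap (boundaryHom d) := by
  intro W hW
  refine map_supported_le _ _ _ fun Q hQ => ?_
  rw [boundaryHom_single, one_smul]
  refine Finsupp.supported_mono ?_ (boundaryCube_mem d Q)
  rintro R ⟨h1, h2⟩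
  exact hW Q hQ R h2

lemma isLocal_comp {d : ℕ} {φ ψ : CubChain d →ₗ[ℤ] CubChain d} (hφ : IsLocalMap φ)
    (hψ : IsLocalMap ψ) : IsLocalMap (φ ∘ₗ ψ) := by
  intro W hW
  rw [Submodule.map_comp]
  exact (Submodule.map_mono (hψ W hW)).trans (hφ W hW)

lemma finrank_supported {α : Type*} {s : Set α} (hs : s.Finite) :
    Module.finrank ℤ (Finsupp.supported ℤ ℤ s) = s.ncard := by
  have := hs.fintype
  rw [(Finsupp.supportedEquivFinsupp (M := ℤ) (R := ℤ) s).finrank_eq, Module.finrank_finsupp_self,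
    Set.ncard_eq_toFinset_card', Set.toFinset_card]

lemma finite_supported {α : Type*} {s : Set α} (hs : s.Finite) :
    Module.Finite ℤ (Finsupp.supported ℤ ℤ s) := by
  have := hs.fintype
  exact Module.Finite.equiv (Finsupp.supportedEquivFinsupp (M := ℤ) (R := ℤ) s).symm

lemma rk_map_ker {M N : Type*} [AddCommGroup M] [AddCommGroup N] (V : Submodule ℤ M)
    [Module.Finite ℤ V] (φ : M →ₗ[ℤ] N) :
    Module.finrank ℤ (Submodule.map φ V) + Module.finrank ℤ ↥(V ⊓ LinearMap.ker φ)
      = Module.finrank ℤ V := by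
  have h := Submodule.finrank_quotient_add_finrank (LinearMap.ker (φ.domRestrict V))
  rw [(φ.domRestrict V).quotKerEquivRange.finrank_eq, LinearMap.range_domRestrict] at h
  rw [← h]
  congr 1
  rw [LinearMap.ker_domRestrict, ← Submodule.map_comap_subtype]
  exact (Submodule.equivMapOfInjective _ V.injective_subtype _).finrank_eq.symm

def rk {d : ℕ} (φ : CubChain d →ₗ[ℤ] CubChain d) (k : ℕ) (A : Set (ElemCube d)) : ℕ :=
  Module.finrank ℤ (Submodule.map φ (chA d k A))

lemma dimPart_finite {d k : ℕ} {A : Set (ElemCube d)} (hA : A.Finite) : (dimPart k A).Finite :=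
  hA.subset fun _ h => h.2

lemma bettiA_formula {d : ℕ} (q : ℕ) {A : Set (ElemCube d)} (hA : A.Finite) (hF : FaceClosed A) :
    (bettiA d q A : ℤ) = (dimPart q A).ncard - rk (boundaryHom d) q A
      - rk (boundaryHom d) (q+1) A + rk (boundaryHom d ∘ₗ boundaryHom d) (q+1) A := by
  have f1 : Module.Finite ℤ (chA d q A) := finite_supported (dimPart_finite hA)
  have f2 : Module.Finite ℤ (chA d (q+1) A) := finite_supported (dimPart_finite hA)
  have e1 := rk_map_ker (chA d q A) (boundaryHom d)
  have e2 := rk_map_ker (Submodule.map (boundaryHom d) (chA d (q+1) A)) (boundaryHom d)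
  rw [← Submodule.map_comp] at e2
  have e0 : Module.finrank ℤ (chA d q A) = (dimPart q A).ncard :=
    finrank_supported (dimPart_finite hA)
  set Z := chA d q A ⊓ LinearMap.ker (boundaryHom d) with hZ
  have f3 : Module.Finite ℤ Z :=
    Module.Finite.of_injective (Submodule.inclusion (inf_le_left : Z ≤ chA d q A))
      (Submodule.inclusion_injective _)
  have e3 := Submodule.finrank_quotient_add_finrank
    ((Submodule.map (boundaryHom d) (chA d (q + 1) A)).comap Z.subtype)
  have e4 : Module.finrank ℤ ((Submodule.map (boundaryHom d) (chA d (q + 1) A)).comap Z.subtype)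
      = Module.finrank ℤ ↥(Submodule.map (boundaryHom d) (chA d (q + 1) A)
        ⊓ LinearMap.ker (boundaryHom d)) := by
    rw [(Submodule.equivMapOfInjective _ Z.injective_subtype _).finrank_eq,
      Submodule.map_comap_subtype]
    have := map_boundary_chA q hF
    have e6 : Z ⊓ Submodule.map (boundaryHom d) (chA d (q + 1) A) =
        Submodule.map (boundaryHom d) (chA d (q + 1) A) ⊓ LinearMap.ker (boundaryHom d) := by
      rw [hZ]
      apply le_antisymm
      · exact le_inf inf_le_right (inf_le_left.trans inf_le_right)
      · exact le_inf (le_inf (inf_le_left.trans this) inf_le_right) inf_le_left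
    rw [e6]
  have e5 : bettiA d q A = Module.finrank ℤ (↥Z ⧸
      (Submodule.map (boundaryHom d) (chA d (q + 1) A)).comap Z.subtype) := rfl
  unfold rk
  omega

lemma chA_union {d k : ℕ} (A A' : Set (ElemCube d)) :
    chA d k (A ∪ A') = chA d k A ⊔ chA d k A' := by
  unfold chA
  rw [← Finsupp.supported_union]
  congr 1
  ext Q; simp [dimPart]; tauto

lemma finrank_sup_disj {M : Type*} [AddCommGroup M] (V W : Submodule ℤ M) [Module.Finite ℤ V]
    [Module.Finite ℤ W] :
    Module.finrank ℤ ↥(V ⊔ W) + Module.finrank ℤ ↥(V ⊓ W) =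
      Module.finrank ℤ V + Module.finrank ℤ W := by
  have h := Submodule.rank_sup_add_rank_inf_eq V W
  have f : Module.Finite ℤ ↥(V ⊓ W) :=
    Module.Finite.of_injective (Submodule.inclusion (inf_le_left : V ⊓ W ≤ V))
      (Submodule.inclusion_injective _)
  rw [← Module.finrank_eq_rank, ← Module.finrank_eq_rank, ← Module.finrank_eq_rank,
    ← Module.finrank_eq_rank] at h
  exact_mod_cast h

lemma rk_le {d k : ℕ} (φ : CubChain d →ₗ[ℤ] CubChain d) {A : Set (ElemCube d)} (hA : A.Finite) :
    rk φ k A ≤ A.ncard := by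
  have f1 : Module.Finite ℤ (chA d k A) := finite_supported (dimPart_finite hA)
  have := rk_map_ker (chA d k A) φ
  have e0 : Module.finrank ℤ (chA d k A) = (dimPart k A).ncard :=
    finrank_supported (dimPart_finite hA)
  have : (dimPart k A).ncard ≤ A.ncard := Set.ncard_le_ncard (fun _ h => h.2) hA
  unfold rk
  omega

lemma rk_union_le {d k : ℕ} (φ : CubChain d →ₗ[ℤ] CubChain d) {A A' : Set (ElemCube d)}
    (hA : A.Finite) (hA' : A'.Finite) : rk φ k (A ∪ A') ≤ rk φ k A + rk φ k A' := by
  have f1 : Module.Finite ℤ (chA d k A) := finite_supported (dimPart_finite hA)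
  have f2 : Module.Finite ℤ (chA d k A') := finite_supported (dimPart_finite hA')
  unfold rk
  rw [chA_union, Submodule.map_sup, ← finrank_sup_disj]
  omega

lemma rk_mono {d k : ℕ} (φ : CubChain d →ₗ[ℤ] CubChain d) {A A' : Set (ElemCube d)}
    (hA' : A'.Finite) (h : A ⊆ A') : rk φ k A ≤ rk φ k A' := by
  have f2 : Module.Finite ℤ (chA d k A') := finite_supported (dimPart_finite hA')
  unfold rk
  refine Submodule.finrank_mono (Submodule.map_mono (Finsupp.supported_mono ?_))
  exact fun Q hQ => ⟨hQ.1, h hQ.2⟩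

lemma rk_union {d k : ℕ} {φ : CubChain d →ₗ[ℤ] CubChain d} (hφ : IsLocalMap φ)
    {A A' W W' : Set (ElemCube d)}
    (hA : A.Finite) (hA' : A'.Finite) (hW : FaceClosed W) (hW' : FaceClosed W')
    (hAW : A ⊆ W) (hAW' : A' ⊆ W') (hd : Disjoint W W') :
    rk φ k (A ∪ A') = rk φ k A + rk φ k A' := by
  have f1 : Module.Finite ℤ (chA d k A) := finite_supported (dimPart_finite hA)
  have f2 : Module.Finite ℤ (chA d k A') := finite_supported (dimPart_finite hA')
  unfold rk
  rw [chA_union, Submodule.map_sup, ← finrank_sup_disj]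
  have : Submodule.map φ (chA d k A) ⊓ Submodule.map φ (chA d k A') = ⊥ := by
    rw [← disjoint_iff]
    refine (Finsupp.disjoint_supported_supported hd).mono ?_ ?_
    · exact (Submodule.map_mono (Finsupp.supported_mono fun Q hQ => hAW hQ.2)).trans (hφ W hW)
    · exact (Submodule.map_mono (Finsupp.supported_mono fun Q hQ => hAW' hQ.2)).trans (hφ W' hW')
  rw [this, finrank_bot, add_zero]

lemma rk_lip {d k : ℕ} (φ : CubChain d →ₗ[ℤ] CubChain d) {A A' : Set (ElemCube d)}
    (hA' : A'.Finite) (h : A ⊆ A') : rk φ k A' ≤ rk φ k A + (A' \ A).ncard := by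
  have h1 := rk_union_le (k := k) φ (hA'.subset h) (hA'.subset (Set.sdiff_subset (s := A') (t := A)))
  rw [Set.union_sdiff_cancel h] at h1
  have := rk_le (k := k) φ (hA'.subset (Set.sdiff_subset (s := A') (t := A)))
  omega

lemma bettiA_lip {d : ℕ} (q : ℕ) {A A' : Set (ElemCube d)} (hA' : A'.Finite) (h : A ⊆ A')
    (hF : FaceClosed A) (hF' : FaceClosed A') :
    |(bettiA d q A' : ℤ) - bettiA d q A| ≤ 4 * (A' \ A).ncard := by
  have hA := hA'.subset h
  rw [bettiA_formula q hA hF, bettiA_formula q hA' hF']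
  have a1 := rk_lip (k := q) (boundaryHom d) hA' h
  have a2 := rk_lip (k := q+1) (boundaryHom d) hA' h
  have a3 := rk_lip (k := q+1) (boundaryHom d ∘ₗ boundaryHom d) hA' h
  have b1 := rk_mono (k := q) (boundaryHom d) hA' h
  have b2 := rk_mono (k := q+1) (boundaryHom d) hA' h
  have b3 := rk_mono (k := q+1) (boundaryHom d ∘ₗ boundaryHom d) hA' h
  have c1 : (dimPart q A).ncard ≤ (dimPart q A').ncard :=
    Set.ncard_le_ncard (fun _ hQ => ⟨hQ.1, h hQ.2⟩) (dimPart_finite hA')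
  have c2 : (dimPart q A').ncard ≤ (dimPart q A).ncard + (A' \ A).ncard := by
    refine le_trans (Set.ncard_le_ncard (t := dimPart q A ∪ (A' \ A)) ?_ ?_) (Set.ncard_union_le _ _)
    · intro Q hQ
      by_cases hQA : Q ∈ A
      · exact Or.inl ⟨hQ.1, hQA⟩
      · exact Or.inr ⟨hQ.2, hQA⟩
    · exact (dimPart_finite hA).union (hA'.subset Set.sdiff_subset)
  rw [abs_le]
  constructor <;> omega

lemma bettiA_union {d : ℕ} (q : ℕ) {A A' W W' : Set (ElemCube d)}
    (hA : A.Finite) (hA' : A'.Finite) (hF : FaceClosed A) (hF' : FaceClosed A')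
    (hW : FaceClosed W) (hW' : FaceClosed W')
    (hAW : A ⊆ W) (hAW' : A' ⊆ W') (hd : Disjoint W W') :
    bettiA d q (A ∪ A') = bettiA d q A + bettiA d q A' := by
  have hU : FaceClosed (A ∪ A') := by
    rintro Q (hQ | hQ) R hR
    · exact Or.inl (hF Q hQ R hR)
    · exact Or.inr (hF' Q hQ R hR)
  have e := bettiA_formula q (hA.union hA') hU
  have e1 := bettiA_formula q hA hF
  have e2 := bettiA_formula q hA' hF'
  have a1 := rk_union (k := q) (isLocal_boundary d) hA hA' hW hW' hAW hAW' hd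
  have a2 := rk_union (k := q+1) (isLocal_boundary d) hA hA' hW hW' hAW hAW' hd
  have a3 := rk_union (k := q+1) (isLocal_comp (isLocal_boundary d) (isLocal_boundary d))
    hA hA' hW hW' hAW hAW' hd
  have c : (dimPart q (A ∪ A')).ncard = (dimPart q A).ncard + (dimPart q A').ncard := by
    rw [← Set.ncard_union_eq _ (dimPart_finite hA) (dimPart_finite hA')]
    · congr 1; ext Q; simp [dimPart]; tauto
    · exact hd.mono (fun _ h => hAW h.2) (fun _ h => hAW' h.2)
  omega

lemma bettiA_empty {d : ℕ} (q : ℕ) : bettiA d q (∅ : Set (ElemCube d)) = 0 := by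
  have e := bettiA_formula (d := d) q Set.finite_empty (fun _ h => absurd h (Set.notMem_empty _))
  have a1 := rk_le (k := q) (boundaryHom d) (Set.finite_empty (α := ElemCube d))
  have a2 := rk_le (k := q+1) (boundaryHom d) (Set.finite_empty (α := ElemCube d))
  have a3 := rk_le (k := q+1) (boundaryHom d ∘ₗ boundaryHom d) (Set.finite_empty (α := ElemCube d))
  have : dimPart q (∅ : Set (ElemCube d)) = ∅ := by ext; simp [dimPart]
  rw [this] at e
  simp only [Set.ncard_empty] at *
  omega

lemma bettiA_biUnion {d : ℕ} (q : ℕ) {ι : Type*} (s : Finset ι) (A W : ι → Set (ElemCube d))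
    (hA : ∀ i, (A i).Finite) (hF : ∀ i, FaceClosed (A i)) (hW : ∀ i, FaceClosed (W i))
    (hAW : ∀ i, A i ⊆ W i) (hd : (s : Set ι).PairwiseDisjoint W) :
    bettiA d q (⋃ i ∈ s, A i) = ∑ i ∈ s, bettiA d q (A i) := by
  classical
  induction s using Finset.induction_on with
  | empty => simp [bettiA_empty]
  | insert a s ha ih =>
    rw [Finset.sum_insert ha, Finset.set_biUnion_insert, ← ih (hd.subset (by simp))]
    refine bettiA_union q (W := W a) (W' := ⋃ i ∈ s, W i) (hA a)
      (s.finite_toSet.biUnion fun i _ => hA i) (hF a) ?_ (hW a) ?_ (hAW a) ?_ ?_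
    · intro Q hQ R hR
      simp only [Set.mem_iUnion] at hQ ⊢
      obtain ⟨i, hi, hQ⟩ := hQ
      exact ⟨i, hi, hF i Q hQ R hR⟩
    · intro Q hQ R hR
      simp only [Set.mem_iUnion] at hQ ⊢
      obtain ⟨i, hi, hQ⟩ := hQ
      exact ⟨i, hi, hW i Q hQ R hR⟩
    · exact Set.iUnion₂_mono fun i _ => hAW i
    · rw [Set.disjoint_iUnion₂_right]
      intro i hi
      exact hd (by simp) (by simp [hi]) (by rintro rfl; exact ha hi)


lemma translateCube_cons {d : ℕ} (x : Fin (d+1) → ℤ) (a : ℤ × Bool) (R : ElemCube d) :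
    translateCube x (Fin.cons a R : ElemCube (d+1)) =
      (Fin.cons (a.1 + x 0, a.2) (translateCube (fun i => x i.succ) R) : ElemCube (d+1)) := by
  funext i; refine Fin.cases ?_ (fun i => ?_) i <;> simp [translateCube]

lemma boundaryCube_translate (d : ℕ) : ∀ (x : Fin d → ℤ) (Q : ElemCube d),
    boundaryCube d (translateCube x Q) = Finsupp.mapDomain (translateCube x) (boundaryCube d Q) := by
  induction d with
  | zero => intro x Q; simp [boundaryCube]
  | succ d ih =>
    intro x Q
    obtain ⟨a, P, rfl⟩ : ∃ a P, Q = (Fin.cons a P : ElemCube (d+1)) :=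
      ⟨Q 0, fun i => Q i.succ, (Fin.cons_self_tail Q).symm⟩
    have key : ∀ (b : ℤ × Bool) (c : CubChain d),
        c.sum (fun R n => Finsupp.single (Fin.cons b R : ElemCube (d+1)) n) =
          Finsupp.mapDomain (fun R => (Fin.cons b R : ElemCube (d+1))) c := fun b c => rfl
    rw [translateCube_cons]
    simp only [boundaryCube, Fin.cons_zero, Fin.cons_succ, key]
    rw [show (fun i => translateCube (fun i => x i.succ) P i)
      = translateCube (fun i => x i.succ) P from rfl, show (fun i => P i) = P from rfl, ih,
      Finsupp.mapDomain_add, Finsupp.mapDomain_smul, ← Finsupp.mapDomain_comp,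
      ← Finsupp.mapDomain_comp]
    congr 1
    · split_ifs with h
      · rw [sub_eq_add_neg, sub_eq_add_neg, Finsupp.mapDomain_add, ← Finsupp.single_neg,
          ← Finsupp.single_neg, Finsupp.mapDomain_single, Finsupp.mapDomain_single,
          translateCube_cons, translateCube_cons]
        simp only
        rw [add_right_comm]
      · simp
    · congr 2
      funext R
      simp [Function.comp_def, translateCube_cons]

lemma translateCube_inj {d : ℕ} (x : Fin d → ℤ) : Function.Injective (translateCube x) := by
  intro Q R h
  funext i
  have := congrFun h i
  simp only [translateCube, Prod.mk.injEq, add_left_inj] at this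
  exact Prod.ext this.1 this.2

lemma translateCube_translateCube {d : ℕ} (x y : Fin d → ℤ) (Q : ElemCube d) :
    translateCube x (translateCube y Q) = translateCube (y + x) Q := by
  funext i; simp [translateCube, add_assoc]

lemma translateCube_zero {d : ℕ} (Q : ElemCube d) : translateCube 0 Q = Q := by
  funext i; simp [translateCube]

lemma cubeDim_translate {d : ℕ} (x : Fin d → ℤ) (Q : ElemCube d) :
    cubeDim (translateCube x Q) = cubeDim Q := rfl

lemma boundaryHom_comm {d : ℕ} (x : Fin d → ℤ) :
    boundaryHom d ∘ₗ Finsupp.lmapDomain ℤ ℤ (translateCube x) =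
      Finsupp.lmapDomain ℤ ℤ (translateCube x) ∘ₗ boundaryHom d := by
  refine Finsupp.lhom_ext fun Q n => ?_
  simp only [LinearMap.comp_apply, Finsupp.lmapDomain_apply, Finsupp.mapDomain_single,
    boundaryHom_single, boundaryCube_translate, Finsupp.mapDomain_smul]

lemma dimPart_image {d : ℕ} (x : Fin d → ℤ) (k : ℕ) (A : Set (ElemCube d)) :
    dimPart k (translateCube x '' A) = translateCube x '' dimPart k A := by
  ext Q
  constructor
  · rintro ⟨h, R, hR, rfl⟩
    exact ⟨R, ⟨h, hR⟩, rfl⟩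
  · rintro ⟨R, ⟨h, hR⟩, rfl⟩
    exact ⟨h, R, hR, rfl⟩

lemma rk_translate {d : ℕ} (x : Fin d → ℤ) (k : ℕ) (A : Set (ElemCube d))
    (φ : CubChain d →ₗ[ℤ] CubChain d)
    (hφ : φ ∘ₗ Finsupp.lmapDomain ℤ ℤ (translateCube x) =
      Finsupp.lmapDomain ℤ ℤ (translateCube x) ∘ₗ φ) :
    rk φ k (translateCube x '' A) = rk φ k A := by
  unfold rk chA
  rw [dimPart_image, ← Finsupp.lmapDomain_supported, ← Submodule.map_comp, hφ, Submodule.map_comp]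
  exact (Submodule.equivMapOfInjective _
    (Finsupp.mapDomain_injective (translateCube_inj x)) _).finrank_eq.symm

lemma bettiA_translate {d : ℕ} (q : ℕ) (x : Fin d → ℤ) {A : Set (ElemCube d)} (hA : A.Finite)
    (hF : FaceClosed A) (hF' : FaceClosed (translateCube x '' A)) :
    bettiA d q (translateCube x '' A) = bettiA d q A := by
  have e1 := bettiA_formula q hA hF
  have e2 := bettiA_formula q (hA.image (translateCube x)) hF'
  have h1 := boundaryHom_comm x
  rw [rk_translate x _ _ _ h1, rk_translate x _ _ _ h1, rk_translate x _ _ _ (by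
    rw [LinearMap.comp_assoc, h1, ← LinearMap.comp_assoc, h1, LinearMap.comp_assoc]),
    dimPart_image, Set.ncard_image_of_injective _ (translateCube_inj x)] at e2
  omega

/-- boxes of cubes -/
def boxF (d : ℕ) (a : Fin d → ℤ) (L : ℕ) : Finset (ElemCube d) :=
  Fintype.piFinset fun i =>
    Finset.Icc (a i) (a i + L) ×ˢ {false} ∪ Finset.Ico (a i) (a i + L) ×ˢ {true}

lemma mem_boxF {d : ℕ} {a : Fin d → ℤ} {L : ℕ} {Q : ElemCube d} :
    Q ∈ boxF d a L ↔ ∀ i, a i ≤ (Q i).1 ∧ (Q i).1 + (if (Q i).2 then 1 else 0) ≤ a i + L := by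
  simp only [boxF, Fintype.mem_piFinset]
  refine forall_congr' fun i => ?_
  rcases Q i with ⟨l, b⟩
  cases b
  · simp
  · simp

lemma card_boxF (d : ℕ) (a : Fin d → ℤ) (L : ℕ) : (boxF d a L).card = (2 * L + 1) ^ d := by
  rw [boxF, Fintype.card_piFinset]
  have : ∀ i, (Finset.Icc (a i) (a i + L) ×ˢ {false} ∪ Finset.Ico (a i) (a i + L) ×ˢ {true}
      : Finset (ℤ × Bool)).card = 2 * L + 1 := by
    intro i
    rw [Finset.card_union_of_disjoint]
    · simp; omega
    · rw [Finset.disjoint_left]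
      rintro ⟨l, b⟩ h1 h2
      simp at h1 h2
      rw [h1.2] at h2; simp at h2
  rw [Finset.prod_congr rfl fun i _ => this i]; simp

lemma boxF_eq {d : ℕ} (a : Fin d → ℤ) (L : ℕ) :
    (boxF d a L : Set (ElemCube d)) = cubesIn {x | ∀ i, x i ∈ Set.Icc (a i : ℝ) (a i + L)} := by
  ext Q
  rw [Finset.mem_coe, mem_boxF]
  constructor
  · intro h x hx i
    have h1 := hx i
    obtain ⟨h2, h3⟩ := h i
    have h2' : (a i : ℝ) ≤ (Q i).1 := by exact_mod_cast h2
    have h3' : ((Q i).1 : ℝ) + (if (Q i).2 then 1 else 0) ≤ a i + L := by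
      split_ifs at h3 ⊢ <;> exact_mod_cast h3
    exact ⟨h2'.trans h1.1, h1.2.trans h3'⟩
  · intro h i
    have h1 := h (a := fun i => ((Q i).1 : ℝ)) (fun i => ⟨le_rfl, by split_ifs <;> simp⟩) i
    have h2 := h (a := fun i => ((Q i).1 : ℝ) + (if (Q i).2 then 1 else 0))
      (fun i => ⟨by dsimp only; split_ifs <;> simp, le_rfl⟩) i
    have h1' := h1.1
    dsimp only at h1'
    refine ⟨by exact_mod_cast h1', ?_⟩
    have := h2.2
    dsimp only at this
    split_ifs at this ⊢ <;> exact_mod_cast this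

lemma boxF_faceClosed {d : ℕ} (a : Fin d → ℤ) (L : ℕ) : FaceClosed (boxF d a L : Set (ElemCube d)) := by
  rw [boxF_eq]; exact faceClosed_cubesIn _

def KK {d : ℕ} (t : ℝ) (ω : Config d) : Set (ElemCube d) :=
  {Q | ∃ Q', (ω Q' : ℝ) ≤ t ∧ cubeSet Q ⊆ cubeSet Q'}

lemma KK_faceClosed {d : ℕ} (t : ℝ) (ω : Config d) : FaceClosed (KK t ω) := by
  rintro Q ⟨Q', h1, h2⟩ R hR
  exact ⟨Q', h1, hR.trans h2⟩

lemma cubesIn_cubSet {d : ℕ} (t : ℝ) (ω : Config d) : cubesIn (cubSet ω t) = KK t ω := by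
  ext Q
  constructor
  · intro h
    have h1 := h (a := fun i => ((Q i).1 : ℝ) + (if (Q i).2 then 1/2 else 0))
      (fun i => ⟨by dsimp only; split_ifs <;> norm_num, by dsimp only; split_ifs <;> norm_num⟩)
    simp only [cubSet, Set.mem_iUnion] at h1
    obtain ⟨Q', hQ', h1⟩ := h1
    refine ⟨Q', hQ', fun x hx i => ?_⟩
    have h2 := h1 i
    have h3 := hx i
    dsimp only at h2
    rcases hQi : Q i with ⟨l, b⟩
    rcases hQi' : Q' i with ⟨l', b'⟩
    rw [hQi] at h2 h3
    rw [hQi'] at h2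
    cases b
    · simp only [Set.mem_Icc, Bool.false_eq_true, if_false, add_zero] at h2 h3
      have : x i = l := le_antisymm h3.2 h3.1
      rw [this]; exact h2
    · simp only [Set.mem_Icc, if_true] at h2 h3 ⊢
      cases b'
      · exfalso
        simp only [Bool.false_eq_true, if_false, add_zero] at h2
        have a1 : l' < l + 1 := by
          have : (l' : ℝ) < l + 1 := by linarith
          exact_mod_cast this
        have a2 : l < l' := by
          have : (l : ℝ) < l' := by linarith
          exact_mod_cast this
        omega
      · simp only [if_true] at h2 ⊢
        have a1 : l' < l + 1 := by
          have : (l' : ℝ) < l + 1 := by linarith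
          exact_mod_cast this
        have a2 : l < l' + 1 := by
          have : (l : ℝ) < l' + 1 := by linarith
          exact_mod_cast this
        have : l = l' := by omega
        subst this
        exact h3
  · rintro ⟨Q', h1, h2⟩ x hx
    simp only [cubSet, Set.mem_iUnion]
    exact ⟨Q', h1, h2 hx⟩

lemma bettiN_eq (d q n : ℕ) (t : ℝ) (ω : Config d) :
    bettiN d q n t ω = bettiA d q (KK t ω ∩ boxF d (fun _ => -(n:ℤ)) (2 * n)) := by
  rw [bettiN, betti_eq, ← cubesIn_cubSet, boxF_eq]
  congr 1
  have : lambda d n = {x | ∀ i : Fin d, x i ∈ Set.Icc (((-(n:ℤ) : ℤ)) : ℝ) (((-(n:ℤ) : ℤ) : ℝ) + ((2 * n : ℕ) : ℝ))} := by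
    ext x
    simp only [lambda, Set.mem_ofPred_eq]
    refine forall_congr' fun i => ?_
    have : (((-(n:ℤ) : ℤ) : ℝ) + ((2 * n : ℕ) : ℝ)) = n := by push_cast; ring
    rw [this]; push_cast; rfl
  rw [← this]
  ext Q
  exact Set.subset_inter_iff

lemma mem_cubeSet_translate {d : ℕ} (x : Fin d → ℤ) (Q : ElemCube d) (y : Fin d → ℝ) :
    y ∈ cubeSet (translateCube x Q) ↔ (fun i => y i - x i) ∈ cubeSet Q := by
  simp only [cubeSet, Set.mem_ofPred_eq, translateCube, Set.mem_Icc]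
  refine forall_congr' fun i => ?_
  push_cast
  by_cases hb : (Q i).2 = true <;> simp only [hb, if_true, if_false, Bool.false_eq_true] <;> constructor <;> rintro ⟨h1, h2⟩ <;> constructor <;> linarith

lemma cubeSet_translate_mono {d : ℕ} (x : Fin d → ℤ) {Q R : ElemCube d}
    (h : cubeSet Q ⊆ cubeSet R) : cubeSet (translateCube x Q) ⊆ cubeSet (translateCube x R) := by
  intro y hy
  rw [mem_cubeSet_translate] at hy ⊢
  exact h hy

lemma mem_KK_shift {d : ℕ} (t : ℝ) (ω : Config d) (x : Fin d → ℤ) (Q : ElemCube d) :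
    Q ∈ KK t (configShift (-x) ω) ↔ translateCube x Q ∈ KK t ω := by
  constructor
  · rintro ⟨Q', h1, h2⟩
    simp only [configShift, neg_neg] at h1
    exact ⟨_, h1, cubeSet_translate_mono x h2⟩
  · rintro ⟨Q', h1, h2⟩
    refine ⟨translateCube (-x) Q', ?_, ?_⟩
    · simp only [configShift, neg_neg]
      rw [translateCube_translateCube, neg_add_cancel, translateCube_zero]
      exact h1
    · have := cubeSet_translate_mono (-x) h2
      rwa [translateCube_translateCube, add_neg_cancel, translateCube_zero] at this

def floc (d q L : ℕ) (t : ℝ) (ω : Config d) : ℝ := bettiA d q (KK t ω ∩ boxF d 0 L)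

lemma inter_faceClosed {d : ℕ} {A B : Set (ElemCube d)} (hA : FaceClosed A) (hB : FaceClosed B) :
    FaceClosed (A ∩ B) := fun Q hQ R hR => ⟨hA Q hQ.1 R hR, hB Q hQ.2 R hR⟩

lemma floc_shift (d q L : ℕ) (t : ℝ) (ω : Config d) (x : Fin d → ℤ) :
    floc d q L t (configShift (-x) ω) = bettiA d q (KK t ω ∩ boxF d x L) := by
  have e : KK t ω ∩ boxF d x L =
      translateCube x '' (KK t (configShift (-x) ω) ∩ boxF d 0 L) := by
    ext Q
    constructor
    · rintro ⟨h1, h2⟩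
      have e1 : translateCube x (translateCube (-x) Q) = Q := by
        rw [translateCube_translateCube, neg_add_cancel, translateCube_zero]
      refine ⟨translateCube (-x) Q, ⟨?_, ?_⟩, e1⟩
      · rw [mem_KK_shift, e1]; exact h1
      · rw [Finset.mem_coe, mem_boxF] at h2 ⊢
        intro i
        have := h2 i
        simp only [translateCube, Pi.neg_apply, Pi.zero_apply]
        revert this
        by_cases hb : (Q i).2 = true <;> simp only [hb, if_true, if_false, Bool.false_eq_true] <;> omega
    · rintro ⟨R, ⟨h1, h2⟩, rfl⟩
      refine ⟨(mem_KK_shift _ _ _ _).1 h1, ?_⟩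
      rw [Finset.mem_coe, mem_boxF] at h2 ⊢
      intro i
      have := h2 i
      simp only [translateCube, Pi.zero_apply] at this ⊢
      revert this
      by_cases hb : (R i).2 = true <;> simp only [hb, if_true, if_false, Bool.false_eq_true] <;> omega
  have hF := inter_faceClosed (KK_faceClosed t ω) (boxF_faceClosed x L)
  rw [e] at hF ⊢
  rw [floc, bettiA_translate q x ((Finset.finite_toSet _).inter_of_right _)
    (inter_faceClosed (KK_faceClosed _ _) (boxF_faceClosed _ _)) hF]

lemma bettiA_le {d : ℕ} (q : ℕ) {A : Set (ElemCube d)} (hA : A.Finite) (hF : FaceClosed A) :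
    bettiA d q A ≤ 4 * A.ncard := by
  have := bettiA_lip q hA (Set.empty_subset A) (fun _ h => absurd h (Set.notMem_empty _)) hF
  rw [bettiA_empty, Set.sdiff_empty] at this
  have := (abs_le.1 this).2
  omega

lemma bettiA_box_le {d : ℕ} (q : ℕ) (t : ℝ) (ω : Config d) (a : Fin d → ℤ) (L : ℕ) :
    bettiA d q (KK t ω ∩ boxF d a L) ≤ 4 * (2 * L + 1) ^ d := by
  refine (bettiA_le q ((Finset.finite_toSet _).inter_of_right _)
    (inter_faceClosed (KK_faceClosed _ _) (boxF_faceClosed _ _))).trans ?_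
  rw [← card_boxF d a L, ← Set.ncard_coe_finset]
  gcongr
  · exact Finset.finite_toSet _
  · exact Set.inter_subset_right

lemma bettiA_meas {d : ℕ} (q : ℕ) (t : ℝ) (F : Finset (ElemCube d)) :
    Measurable (fun ω : Config d => bettiA d q (KK t ω ∩ F)) := by
  have h1 : ∀ Q : ElemCube d, MeasurableSet {ω : Config d | Q ∈ KK t ω} := by
    intro Q
    have : {ω : Config d | Q ∈ KK t ω} =
        ⋃ Q' : ElemCube d, {ω | (ω Q' : ℝ) ≤ t ∧ cubeSet Q ⊆ cubeSet Q'} := by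
      ext ω; simp [KK]
    rw [this]
    refine MeasurableSet.iUnion fun Q' => ?_
    refine MeasurableSet.inter (s₁ := {ω : Config d | (ω Q' : ℝ) ≤ t}) ?_ (MeasurableSet.const _)
    exact measurableSet_le (measurable_subtype_coe.comp (measurable_pi_apply Q')) measurable_const
  have h2 : Measurable (fun (ω : Config d) (Q : F) => (Q : ElemCube d) ∈ KK t ω) :=
    measurable_pi_lambda _ fun Q => measurableSet_setOfPred.1 (h1 Q)
  have h3 : Measurable (fun p : F → Prop => bettiA d q {Q | ∃ h : Q ∈ F, p ⟨Q, h⟩}) :=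
    Measurable.of_discrete
  convert h3.comp h2 using 2 with ω
  congr 1
  ext Q
  simp [and_comm]

/-- block estimate for one residue class -/
lemma block_one (d q L m : ℕ) (t : ℝ) (ω : Config d) (s : Finset (Fin d → ℤ))
    (hs : s ⊆ zbox d m) (hsep : ∀ x ∈ s, ∀ y ∈ s, x ≠ y → ∃ i, (L:ℤ) < |x i - y i|) :
    |(bettiN d q (m + L) t ω : ℝ) - ∑ x ∈ s, floc d q L t (configShift (-x) ω)|
      ≤ 4 * ((4 * ((m + L : ℕ) : ℝ) + 1) ^ d - s.card * (2 * (L:ℝ) + 1) ^ d) := by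
  classical
  set B : Finset (ElemCube d) := boxF d (fun _ => -((m + L : ℕ):ℤ)) (2 * (m + L)) with hB
  have hsub : ∀ x ∈ s, boxF d x L ⊆ B := by
    intro x hx Q hQ
    have h1 := hs hx
    rw [hB, mem_boxF]
    rw [mem_boxF] at hQ
    simp only [zbox, Fintype.mem_piFinset, Finset.mem_Ico] at h1
    intro i
    have := h1 i
    have := hQ i
    push_cast
    constructor
    · omega
    · split_ifs at this ⊢ <;> omega
  have hdis : (s : Set (Fin d → ℤ)).PairwiseDisjoint fun x => boxF d x L := by
    intro x hx y hy hxy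
    simp only [Function.onFun]
    rw [Finset.disjoint_left]
    intro Q h1 h2
    rw [mem_boxF] at h1 h2
    obtain ⟨i, hi⟩ := hsep x hx y hy hxy
    have h1 := h1 i
    have h2 := h2 i
    rw [lt_abs] at hi
    split_ifs at h1 h2 <;> omega
  have hdis' : (s : Set (Fin d → ℤ)).PairwiseDisjoint
      fun x => (boxF d x L : Set (ElemCube d)) := by
    intro x hx y hy hxy
    exact Finset.disjoint_coe.2 (hdis hx hy hxy)
  have hA : ∀ x, (KK t ω ∩ boxF d x L).Finite := fun x => (Finset.finite_toSet _).inter_of_right _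
  have hAF : ∀ x, FaceClosed (KK t ω ∩ boxF d x L) := fun x =>
    inter_faceClosed (KK_faceClosed _ _) (boxF_faceClosed _ _)
  have e1 := bettiA_biUnion q s (fun x => KK t ω ∩ boxF d x L) (fun x => boxF d x L) hA hAF
    (fun x => boxF_faceClosed _ _) (fun x => Set.inter_subset_right) hdis'
  have e2 := bettiA_lip q (A := ⋃ x ∈ s, KK t ω ∩ boxF d x L) (A' := KK t ω ∩ B)
    ((Finset.finite_toSet _).inter_of_right _)
    (Set.iUnion₂_subset fun x hx => Set.inter_subset_inter_right _ (by exact_mod_cast hsub x hx))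
    (by
      intro Q hQ R hR
      simp only [Set.mem_iUnion] at hQ ⊢
      obtain ⟨i, hi, hQ⟩ := hQ
      exact ⟨i, hi, hAF i Q hQ R hR⟩)
    (inter_faceClosed (KK_faceClosed _ _) (boxF_faceClosed _ _))
  have e3 : ((KK t ω ∩ B) \ ⋃ x ∈ s, KK t ω ∩ boxF d x L).ncard
      ≤ (B \ s.biUnion fun x => boxF d x L).card := by
    rw [← Set.ncard_coe_finset]
    refine Set.ncard_le_ncard ?_ (Finset.finite_toSet _)
    rintro Q ⟨⟨h1, h2⟩, h3⟩
    simp only [Finset.coe_sdiff, Set.mem_sdiff, Finset.mem_coe, Finset.mem_biUnion] at h2 ⊢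
    refine ⟨h2, ?_⟩
    rintro ⟨x, hx, hQ⟩
    exact h3 (Set.mem_iUnion₂.2 ⟨x, hx, h1, hQ⟩)
  have e4 : ((B \ s.biUnion fun x => boxF d x L).card : ℝ)
      = (4 * ((m + L : ℕ) : ℝ) + 1) ^ d - s.card * (2 * (L:ℝ) + 1) ^ d := by
    rw [Finset.cast_card_sdiff (Finset.biUnion_subset.2 hsub), Finset.card_biUnion hdis]
    simp only [hB, card_boxF, Finset.sum_const, smul_eq_mul]
    push_cast
    ring
  rw [bettiN_eq, ← hB]
  simp only [floc_shift]
  rw [← Nat.cast_sum, ← e1, ← e4]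
  have e2' : |(bettiA d q (KK t ω ∩ B) : ℝ) - bettiA d q (⋃ x ∈ s, KK t ω ∩ boxF d x L)|
      ≤ 4 * ((KK t ω ∩ B) \ ⋃ x ∈ s, KK t ω ∩ boxF d x L).ncard := by
    exact_mod_cast e2
  refine e2'.trans ?_
  gcongr

lemma block_all (d q L m : ℕ) (t : ℝ) (ω : Config d) :
    |((L:ℝ) + 1) ^ d * (bettiN d q (m + L) t ω : ℝ)
        - ∑ x ∈ zbox d m, floc d q L t (configShift (-x) ω)|
      ≤ 4 * (((L:ℝ) + 1) ^ d * (4 * ((m + L : ℕ) : ℝ) + 1) ^ d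
        - (2 * (m:ℝ)) ^ d * (2 * (L:ℝ) + 1) ^ d) := by
  classical
  set ρ : (Fin d → ℤ) → (Fin d → ZMod (L + 1)) := fun x i => (x i : ZMod (L+1)) with hρ
  have hc : ((Finset.univ : Finset (Fin d → ZMod (L + 1))).card : ℝ) = ((L:ℝ) + 1) ^ d := by
    rw [Finset.card_univ, Fintype.card_fun, ZMod.card, Fintype.card_fin]; push_cast; rfl
  have h1 := fun y => block_one d q L m t ω ((zbox d m).filter fun x => ρ x = y)
    (Finset.filter_subset _ _) (by
      intro x hx z hz hxz
      simp only [Finset.mem_filter] at hx hz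
      obtain ⟨i, hi⟩ := Function.ne_iff.1 hxz
      refine ⟨i, ?_⟩
      have : ρ x i = ρ z i := by rw [hx.2, hz.2]
      have h2 := (ZMod.intCast_eq_intCast_iff_dvd_sub _ _ _).1 this.symm
      have h3 := Int.le_of_dvd (abs_pos.2 (sub_ne_zero.2 hi)) ((dvd_abs _ _).2 h2)
      push_cast at h3
      omega)
  have h2 := Finset.sum_le_sum fun y (_ : y ∈ (Finset.univ : Finset (Fin d → ZMod (L + 1)))) => h1 y
  have h3 := (Finset.abs_sum_le_sum_abs _ _).trans h2
  rw [Finset.sum_sub_distrib, Finset.sum_fiberwise, Finset.sum_const, nsmul_eq_mul, hc,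
    ← Finset.mul_sum, Finset.sum_sub_distrib, Finset.sum_const, nsmul_eq_mul, hc, ← Finset.sum_mul,
    ← Nat.cast_sum] at h3
  have h4 := Finset.card_eq_sum_card_fiberwise (s := zbox d m) (f := ρ) (t := Finset.univ)
    (fun x _ => Finset.mem_coe.2 (Finset.mem_univ _))
  rw [← h4, card_zbox] at h3
  exact h3

lemma det_block (b z r e : ℕ → ℝ) (L : ℕ) (K c E : ℝ) (hK : 0 < K)
    (hz : Tendsto z atTop (𝓝 c)) (hr : Tendsto r atTop (𝓝 1)) (he : Tendsto e atTop (𝓝 E))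
    (h : ∀ᶠ m in atTop, |K * b (m + L) - r m * z m| ≤ e m) :
    ∀ ε > 0, ∀ᶠ n in atTop, |b n - c / K| < E / K + ε := by
  intro ε hε
  have h1 : Tendsto (fun m => (e m + |r m * z m - c|) / K) atTop (𝓝 ((E + |1 * c - c|) / K)) :=
    (he.add ((hr.mul hz).sub_const c).abs).div_const K
  have h2 : (E + |1 * c - c|) / K < E / K + ε := by
    rw [one_mul, sub_self, abs_zero, add_zero]; linarith
  have h3 : ∀ᶠ m in atTop, |b (m + L) - c / K| < E / K + ε := by
    filter_upwards [h1.eventually (gt_mem_nhds h2), h] with m h4 h5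
    refine lt_of_le_of_lt ?_ h4
    rw [le_div_iff₀ hK, ← abs_of_pos hK, ← abs_mul, abs_of_pos hK, sub_mul, div_mul_cancel₀ _ hK.ne']
    have := abs_add_le (K * b (m + L) - r m * z m) (r m * z m - c)
    rw [show K * b (m + L) - r m * z m + (r m * z m - c) = b (m+L) * K - c by ring] at this
    linarith
  rw [eventually_atTop] at h3 ⊢
  obtain ⟨a, ha⟩ := h3
  refine ⟨a + L, fun n hn => ?_⟩
  have := ha (n - L) (by omega)
  rwa [Nat.sub_add_cancel (by omega)] at this

lemma det_lim (b u δ : ℕ → ℝ) (hδ : Tendsto δ atTop (𝓝 0))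
    (h : ∀ L, ∀ ε > 0, ∀ᶠ n in atTop, |b n - u L| < δ L + ε) :
    ∃ c, Tendsto u atTop (𝓝 c) ∧ Tendsto b atTop (𝓝 c) := by
  have hb : CauchySeq b := by
    rw [Metric.cauchySeq_iff']
    intro ε hε
    obtain ⟨L, hL⟩ := (hδ.eventually (gt_mem_nhds (show (0:ℝ) < ε / 4 by positivity))).exists
    obtain ⟨N, hN⟩ := eventually_atTop.1 (h L (ε / 4) (by positivity))
    refine ⟨N, fun n hn => ?_⟩
    rw [Real.dist_eq]
    have h1 := abs_lt.1 (hN n hn)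
    have h2 := abs_lt.1 (hN N le_rfl)
    rw [abs_lt]; constructor <;> linarith
  obtain ⟨c, hc⟩ := cauchySeq_tendsto_of_complete hb
  refine ⟨c, ?_, hc⟩
  have h1 : ∀ L, |u L - c| ≤ δ L := by
    intro L
    refine le_of_forall_pos_le_add fun ε hε => ?_
    rw [abs_sub_comm]
    exact le_of_tendsto ((hc.sub_const (u L)).abs) ((h L ε hε).mono fun _ h => h.le)
  rw [tendsto_iff_dist_tendsto_zero]
  exact squeeze_zero (fun _ => dist_nonneg) h1 hδ

lemma configShift_measurable {d : ℕ} (x : Fin d → ℤ) :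
    Measurable (configShift x : Config d → Config d) :=
  measurable_pi_lambda _ fun _ => measurable_pi_apply _

lemma configShift_mp {d : ℕ} (P : Measure (Config d)) (hstat : Stationary P) (x : Fin d → ℤ) :
    MeasurePreserving (configShift x) P P := by
  refine ⟨configShift_measurable x, ?_⟩
  ext A hA
  rw [Measure.map_apply (configShift_measurable x) hA]
  exact hstat x A hA

lemma floc_ergodic (d q L : ℕ) (t : ℝ) (P : Measure (Config d)) [IsProbabilityMeasure P]
    (hstat : Stationary P) (herg : ErgodicConfig P) :
    ∃ c, ∀ᵐ ω ∂P, Tendsto (fun m => zavg (fun x ω => configShift (-x) ω)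
      (floc d q L t) m ω) atTop (𝓝 c) := by
  refine ergodic_const (C := 4 * (2 * (L:ℝ) + 1) ^ d) ?_ ?_ ?_ ?_ ?_ ?_
  · exact (measurable_from_nat (f := fun n : ℕ => (n : ℝ))).comp (bettiA_meas q t (boxF d 0 L))
  · intro ω
    rw [floc, abs_of_nonneg (Nat.cast_nonneg _)]
    exact_mod_cast bettiA_box_le q t ω 0 L
  · intro i j ω
    funext Q
    simp only [configShift, neg_neg]
    rw [translateCube_translateCube]
  · intro ω
    funext Q
    simp [configShift, translateCube_zero]
  · intro j
    exact configShift_mp P hstat (-j)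
  · intro A hA h
    refine herg A hA fun x => ?_
    simpa using h (-x)

lemma ratio_tendsto (a b c e : ℝ) (hc : c ≠ 0) :
    Tendsto (fun n : ℕ => (a * (n:ℝ) + b) / (c * (n:ℝ) + e)) atTop (𝓝 (a / c)) := by
  have h0 : Tendsto (fun n : ℕ => ((n:ℝ))⁻¹) atTop (𝓝 0) := tendsto_inv_atTop_nhds_zero_nat
  have h1 : Tendsto (fun n : ℕ => (a + b * ((n:ℝ))⁻¹) / (c + e * ((n:ℝ))⁻¹)) atTop
      (𝓝 ((a + b * 0) / (c + e * 0))) :=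
    ((h0.const_mul b).const_add a).div ((h0.const_mul e).const_add c) (by simpa using hc)
  rw [mul_zero, mul_zero, add_zero, add_zero] at h1
  refine h1.congr' ?_
  filter_upwards [eventually_gt_atTop 0] with n hn
  have hn' : (0:ℝ) < n := by exact_mod_cast hn
  rw [← mul_div_mul_right _ _ hn'.ne', add_mul, add_mul, mul_assoc, mul_assoc,
    inv_mul_cancel₀ hn'.ne', mul_one, mul_one]

lemma block_limit (d q L : ℕ) (t : ℝ) (ω : Config d) (c : ℝ)
    (h : Tendsto (fun m => zavg (fun x ω => configShift (-x) ω) (floc d q L t) m ω) atTop (𝓝 c)) :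
    ∀ ε > 0, ∀ᶠ n : ℕ in atTop,
      |((2 * (n : ℝ)) ^ d)⁻¹ * (bettiN d q n t ω : ℝ) - c / ((L:ℝ) + 1) ^ d|
        < (4 * (((L:ℝ) + 1) ^ d * 2 ^ d - 1 * (2 * (L:ℝ) + 1) ^ d)) / ((L:ℝ) + 1) ^ d + ε := by
  have hr : Tendsto (fun m : ℕ => (((2:ℝ) * m + 0) / (2 * m + 2 * L)) ^ d) atTop (𝓝 1) := by
    have := (ratio_tendsto 2 0 2 (2 * L) (by norm_num)).pow d
    rwa [div_self (by norm_num), one_pow] at this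
  have he1 : Tendsto (fun m : ℕ => (((4:ℝ) * m + (4 * L + 1)) / (2 * m + 2 * L)) ^ d) atTop
      (𝓝 (2 ^ d)) := by
    have := (ratio_tendsto 4 (4 * L + 1) 2 (2 * L) (by norm_num)).pow d
    rwa [show (4:ℝ) / 2 = 2 by norm_num] at this
  have he := ((he1.const_mul (((L:ℝ) + 1) ^ d)).sub
    (hr.mul_const ((2 * (L:ℝ) + 1) ^ d))).const_mul 4
  refine det_block (fun n => ((2 * (n : ℝ)) ^ d)⁻¹ * (bettiN d q n t ω : ℝ)) _ _ _ L _ c _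
    (by positivity) h hr he ?_
  filter_upwards [eventually_gt_atTop 0] with m hm
  have hm' : (0:ℝ) < m := by exact_mod_cast hm
  have h1 := block_all d q L m t ω
  have hN : (0:ℝ) < (2 * (m:ℝ) + 2 * L) ^ d := by positivity
  have h2m : (0:ℝ) < (2 * (m:ℝ)) ^ d := by positivity
  have hs : ∑ x ∈ zbox d m, floc d q L t (configShift (-x) ω) =
      (2 * (m:ℝ)) ^ d * zavg (fun x ω => configShift (-x) ω) (floc d q L t) m ω := by
    rw [zavg, mul_inv_cancel_left₀ h2m.ne']
  rw [hs] at h1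
  have h2 := mul_le_mul_of_nonneg_left h1 (inv_nonneg.2 hN.le)
  rw [← abs_of_pos (inv_pos.2 hN), ← abs_mul, abs_of_pos (inv_pos.2 hN)] at h2
  push_cast at h2 ⊢
  refine (le_of_eq ?_).trans (h2.trans (le_of_eq ?_))
  · congr 1
    rw [div_pow, add_zero, ← mul_add]
    ring
  · rw [div_pow, div_pow, add_zero, ← add_assoc, ← mul_add 4]
    ring

lemma delta_tendsto (d : ℕ) :
    Tendsto (fun L : ℕ => (4 * (((L:ℝ) + 1) ^ d * 2 ^ d - 1 * (2 * (L:ℝ) + 1) ^ d))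
      / ((L:ℝ) + 1) ^ d) atTop (𝓝 0) := by
  have h := (((ratio_tendsto 2 1 1 1 one_ne_zero).pow d).const_sub (2 ^ d)).const_mul 4
  rw [div_one, sub_self, mul_zero] at h
  refine h.congr fun L => ?_
  have : (0:ℝ) < ((L:ℝ) + 1) ^ d := by positivity
  rw [one_mul, div_pow]
  field_simp

lemma bettiN_meas (d q n : ℕ) (t : ℝ) : Measurable (fun ω : Config d => (bettiN d q n t ω : ℝ)) := by
  simp only [bettiN_eq]
  exact (measurable_from_nat (f := fun n : ℕ => (n : ℝ))).comp (bettiA_meas q t _)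

lemma bettiN_bound (d q n : ℕ) (t : ℝ) (ω : Config d) :
    |((2 * (n : ℝ)) ^ d)⁻¹ * (bettiN d q n t ω : ℝ)| ≤ 4 * 5 ^ d := by
  rw [abs_of_nonneg (by positivity)]
  rcases Nat.eq_zero_or_pos n with rfl | hn
  · rcases Nat.eq_zero_or_pos d with rfl | hd
    · have h : (bettiN 0 q 0 t ω : ℝ) ≤ 4 * (2 * ((2 * 0 : ℕ) : ℝ) + 1) ^ 0 := by
        rw [bettiN_eq]; exact_mod_cast bettiA_box_le q t ω _ (2 * 0)
      simpa using h
    · simp [hd.ne']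
  · have hn' : (1:ℝ) ≤ n := by exact_mod_cast hn
    have h : (bettiN d q n t ω : ℝ) ≤ 4 * (2 * ((2 * n : ℕ) : ℝ) + 1) ^ d := by
      rw [bettiN_eq]; exact_mod_cast bettiA_box_le q t ω _ (2 * n)
    rw [inv_mul_le_iff₀ (by positivity)]
    refine h.trans ?_
    rw [mul_left_comm, ← mul_pow]
    push_cast
    gcongr
    linarith

/-- **LLN for Betti numbers.** Fix `0 ≤ q < d` and `t ∈ [0,1]`, and let `P` be a
stationary and ergodic probability measure on the configuration space `Ω = [0,1]^{K^d}`.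
Then `|Λ_n|⁻¹ β_q^n(t)` converges `P`-almost surely, as `n → ∞`, to the non-random constant
`β̂_q(t) = limsup_{n→∞} |Λ_n|⁻¹ E[β_q^n(t)]`. -/
theorem lln_betti (d q : ℕ) (hq : q < d) (t : ℝ) (ht : t ∈ Set.Icc (0 : ℝ) 1)
    (P : Measure (Config d)) [IsProbabilityMeasure P]
    (hstat : Stationary P) (herg : ErgodicConfig P) :
    ∀ᵐ ω ∂P,
      Tendsto (fun n : ℕ => ((2 * (n : ℝ)) ^ d)⁻¹ * (bettiN d q n t ω : ℝ))
        atTop (𝓝 (betaHat d q P t)) := by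
  choose c hc using fun L => floc_ergodic d q L t P hstat herg
  have h1 : ∀ᵐ ω ∂P, ∃ a, Tendsto (fun L : ℕ => c L / ((L:ℝ) + 1) ^ d) atTop (𝓝 a) ∧
      Tendsto (fun n : ℕ => ((2 * (n : ℝ)) ^ d)⁻¹ * (bettiN d q n t ω : ℝ)) atTop (𝓝 a) := by
    filter_upwards [ae_all_iff.2 hc] with ω hω
    exact det_lim _ _ _ (delta_tendsto d) fun L => block_limit d q L t ω (c L) (hω L)
  obtain ⟨ω₀, a, ha, -⟩ := h1.exists
  have h2 : ∀ᵐ ω ∂P,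
      Tendsto (fun n : ℕ => ((2 * (n : ℝ)) ^ d)⁻¹ * (bettiN d q n t ω : ℝ)) atTop (𝓝 a) := by
    filter_upwards [h1] with ω hω
    obtain ⟨a', h3, h4⟩ := hω
    rwa [tendsto_nhds_unique ha h3]
  have h3 := tendsto_integral_of_dominated_convergence (μ := P) (fun _ => 4 * (5:ℝ) ^ d)
    (fun n => ((bettiN_meas d q n t).const_mul _).aestronglyMeasurable) (integrable_const _)
    (fun n => Eventually.of_forall fun ω => bettiN_bound d q n t ω) h2
  simp only [integral_const_mul, integral_const, probReal_univ, one_smul] at h3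
  rw [betaHat, h3.limsup_eq]
  exact h2

end
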